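/- With a family (g_{x,σ}) as in the context, for (x, σ, C₁, y, τ, C₂) drawn from the distribution D, the probability that (C₁, C₂) ∈ S, (x, σ) is excellent, and C₁ ∈ 𝒟_{x,σ} is at most 7γε. -/

import Mathlib

/-!
Write `N = q ^ n`. The distribution `D` is encoded by quintuples `(x, u, v, w, w')` of vectors:
`C₁ = x + span(u, v, w)`, `C₂ = x + span(u, v, w')`, `y = x + u`. Each point of the sample space
comes from the same number of quintuples, so probabilities become sums over quintuples, and all but
a small proportion of the `N ^ 5` quintuples do give a pair of cubes meeting in a plane.

Suppose the event occurs at a quintuple, and let `σ = T(C₁)(x)`; by agreement also `T(C₂)(x) = σ`.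

* If `C₂ ∈ ℱ_{x,σ}`, then `T(C₁)` and `g_{x,σ}` coincide at `x + u`, although they differ somewhere
  on `C₁`. The cube `C₁` is also the cube of the quintuple obtained by replacing `u` with a
  combination of `u, v, w` having a nonzero coefficient at `u`, so by Schwartz–Zippel this happens
  for at most a `d / (q - 1)` fraction of the quintuples (`count_vanish`).
* Otherwise both cubes lie in `𝒟_{x,σ}`. Two cubes sharing a random plane through `x` are almost
  independent: a second moment estimate (`expand_step`, `expand_triple`) bounds the number of such
  pairs, relative to all quintuples, by the square of the density of `𝒟_{x,σ}` up to `O(1 / q)`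
  times that density. Since `𝒟_{x,σ}` has at most a fraction `2√γ` of `𝒞_{x,σ}`, summing over `σ`
  gives at most `4γ` times the probability that `T(C₁)(x) = T(C₂)(x)`, up to `O(1 / q)`
  (`count_both`). That probability exceeds `ε` by at most `O(d / q)`, because distinct
  degree-`d` polynomials on the plane rarely agree at a random point (`sum_value_agree`).

The total is at most `4γε + O(d / q)`, and `ε ≥ 10⁷ d⁶ / q` makes the error smaller than `3γε`.
-/

open MvPolynomial

/-- A cube: a 3-dimensional affine subspace of `F^n`. -/
def IsCube (F : Type) [Field F] [Fintype F] (n : ℕ) (C : AffineSubspace F (Fin n → F)) : Prop :=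
  (C : Set (Fin n → F)).Nonempty ∧ Module.finrank F C.direction = 3

/-- A line: a 1-dimensional affine subspace of `F^n`. -/
def IsLine (F : Type) [Field F] [Fintype F] (n : ℕ) (ℓ : AffineSubspace F (Fin n → F)) : Prop :=
  (ℓ : Set (Fin n → F)).Nonempty ∧ Module.finrank F ℓ.direction = 1

/-- `𝒞_x`: cubes containing the point `x`. -/
def cubesOn (F : Type) [Field F] [Fintype F] (n : ℕ) (x : Fin n → F) :
    Set (AffineSubspace F (Fin n → F)) :=
  {C | IsCube F n C ∧ x ∈ C}

/-- `𝒞_{x,y}`: cubes containing the points `x` and `y`. -/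
def cubesOn2 (F : Type) [Field F] [Fintype F] (n : ℕ) (x y : Fin n → F) :
    Set (AffineSubspace F (Fin n → F)) :=
  {C | IsCube F n C ∧ x ∈ C ∧ y ∈ C}

/-- `𝒞_{x,σ}`: cubes containing `x` on which the table `T` gives `x` the value `σ`. -/
def cubesVal (F : Type) [Field F] [Fintype F] (n : ℕ)
    (T : AffineSubspace F (Fin n → F) → (Fin n → F) → F) (x : Fin n → F) (σ : F) :
    Set (AffineSubspace F (Fin n → F)) :=
  {C | IsCube F n C ∧ x ∈ C ∧ T C x = σ}

/-- `μ_x(A)`: measure of `A` relative to all cubes containing `x`. -/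
noncomputable def muX (F : Type) [Field F] [Fintype F] (n : ℕ) (x : Fin n → F)
    (A : Set (AffineSubspace F (Fin n → F))) : ℝ :=
  (A.ncard : ℝ) / ((cubesOn F n x).ncard : ℝ)

/-- `μ_{x,y}(A)`: measure of `A` relative to all cubes containing `x` and `y`. -/
noncomputable def muXY (F : Type) [Field F] [Fintype F] (n : ℕ) (x y : Fin n → F)
    (A : Set (AffineSubspace F (Fin n → F))) : ℝ :=
  (A.ncard : ℝ) / ((cubesOn2 F n x y).ncard : ℝ)

/-- Two cubes intersecting in a plane (a 2-dimensional affine subspace). -/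
def PlanePair (F : Type) [Field F] [Fintype F] (n : ℕ)
    (C₁ C₂ : AffineSubspace F (Fin n → F)) : Prop :=
  IsCube F n C₁ ∧ IsCube F n C₂ ∧
    ((C₁ ⊓ C₂ : AffineSubspace F (Fin n → F)) : Set (Fin n → F)).Nonempty ∧
    Module.finrank F (C₁ ⊓ C₂ : AffineSubspace F (Fin n → F)).direction = 2

/-- `T(C₁)` and `T(C₂)` agree on `C₁ ∩ C₂`. -/
def Agrees (F : Type) [Field F] [Fintype F] (n : ℕ)
    (T : AffineSubspace F (Fin n → F) → (Fin n → F) → F)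
    (C₁ C₂ : AffineSubspace F (Fin n → F)) : Prop :=
  ∀ z : Fin n → F, z ∈ C₁ → z ∈ C₂ → T C₁ z = T C₂ z

/-- `ε(T)`: the acceptance probability of the cube versus cube test. -/
noncomputable def epsT (F : Type) [Field F] [Fintype F] (n : ℕ)
    (T : AffineSubspace F (Fin n → F) → (Fin n → F) → F) : ℝ :=
  (({p : AffineSubspace F (Fin n → F) × AffineSubspace F (Fin n → F) |
      PlanePair F n p.1 p.2 ∧ Agrees F n T p.1 p.2}).ncard : ℝ) /
  (({p : AffineSubspace F (Fin n → F) × AffineSubspace F (Fin n → F) |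
      PlanePair F n p.1 p.2}).ncard : ℝ)

/-- A degree-`d` cubes table: each entry is the restriction to `C` of a polynomial of total
degree at most `d`. -/
def DegTable (F : Type) [Field F] [Fintype F] (n d : ℕ)
    (T : AffineSubspace F (Fin n → F) → (Fin n → F) → F) : Prop :=
  ∀ C : AffineSubspace F (Fin n → F), IsCube F n C →
    ∃ p : MvPolynomial (Fin n) F, p.totalDegree ≤ d ∧ ∀ z ∈ C, T C z = eval z p

/-- `γ = 1/(1000 d³)`. -/
noncomputable def gam (d : ℕ) : ℝ := 1 / (1000 * (d : ℝ) ^ 3)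

/-- `T(C₁)` and `T(C₂)` agree on the line `ℓ`. -/
def LineAgree (F : Type) [Field F] [Fintype F] (n : ℕ)
    (T : AffineSubspace F (Fin n → F) → (Fin n → F) → F)
    (C₁ C₂ ℓ : AffineSubspace F (Fin n → F)) : Prop :=
  ∀ z : Fin n → F, z ∈ ℓ → T C₁ z = T C₂ z

/-- An excellent pair `(x, σ)`: (i) `μ_x(𝒞_{x,σ}) ≥ ε/5`, and (ii) picking `C₁` uniform in
`𝒞_{x,σ}`, a uniform line `ℓ` with `x ∈ ℓ ⊆ C₁`, and `C₂` uniform in `{C ∈ 𝒞_{x,σ} : ℓ ⊆ C}`,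
the probability that `T(C₁)|_ℓ ≠ T(C₂)|_ℓ` is at most `γ`.  (The probability is written as the
sum over the uniformly weighted pairs `(C₁, ℓ)` of the conditional probability over `C₂`,
compared against `γ` times the number of pairs `(C₁, ℓ)`.) -/
def Excellent (F : Type) [Field F] [Fintype F] (n : ℕ)
    (T : AffineSubspace F (Fin n → F) → (Fin n → F) → F)
    (d : ℕ) (ε : ℝ) (x : Fin n → F) (σ : F) : Prop :=
  ε / 5 ≤ muX F n x (cubesVal F n T x σ) ∧
  (∑ᶠ C₁ ∈ cubesVal F n T x σ,
      ∑ᶠ ℓ ∈ {ℓ : AffineSubspace F (Fin n → F) | IsLine F n ℓ ∧ x ∈ ℓ ∧ ℓ ≤ C₁},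
        (({C₂ ∈ cubesVal F n T x σ | ℓ ≤ C₂ ∧ ¬ LineAgree F n T C₁ C₂ ℓ}.ncard : ℝ) /
          ({C₂ ∈ cubesVal F n T x σ | ℓ ≤ C₂}.ncard : ℝ)))
    ≤ gam d * (({p : AffineSubspace F (Fin n → F) × AffineSubspace F (Fin n → F) |
        p.1 ∈ cubesVal F n T x σ ∧ IsLine F n p.2 ∧ x ∈ p.2 ∧ p.2 ≤ p.1}).ncard : ℝ)

/-- `ℱ_{x,σ}`: the cubes of `𝒞_{x,σ}` on which `T` coincides with the global polynomial
`g x σ`. -/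
def calF (F : Type) [Field F] [Fintype F] (n : ℕ)
    (T : AffineSubspace F (Fin n → F) → (Fin n → F) → F)
    (g : (Fin n → F) → F → MvPolynomial (Fin n) F) (x : Fin n → F) (σ : F) :
    Set (AffineSubspace F (Fin n → F)) :=
  {C ∈ cubesVal F n T x σ | ∀ z : Fin n → F, z ∈ C → T C z = eval z (g x σ)}

/-- The sample space of the distribution `D`: tuples `((C₁, C₂), (x, y))` where `C₁, C₂` are
cubes meeting in a plane and `x ≠ y` are points of the plane `C₁ ∩ C₂`.  The distribution `D`
is uniform on this set, with `σ = T(C₁)(x)` and `τ = T(C₂)(y)` determined. -/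
def OmegaD (F : Type) [Field F] [Fintype F] (n : ℕ) :
    Set ((AffineSubspace F (Fin n → F) × AffineSubspace F (Fin n → F)) ×
      (Fin n → F) × (Fin n → F)) :=
  {ω | PlanePair F n ω.1.1 ω.1.2 ∧ ω.2.1 ∈ ω.1.1 ∧ ω.2.1 ∈ ω.1.2 ∧
    ω.2.2 ∈ ω.1.1 ∧ ω.2.2 ∈ ω.1.2 ∧ ω.2.1 ≠ ω.2.2}

/-! ### Second moment estimates -/

/-- If `k` is invariant under adding multiples of `w` to `v`, then the sums `s v = ∑ w, k v w` are
concentrated around their mean. For the deviation `c` of `s` from the mean, invariance gives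
`q * ∑ v, c v ^ 2 = ∑ v, ∑ w, k v w * ∑ a, c (v + a • w)`; apply Cauchy–Schwarz, and use that the
points `v + a • w` are pairwise independent for random `v, w`. -/
lemma expand_step {F V : Type} [Field F] [Fintype F] [AddCommGroup V] [Module F V] [Fintype V]
    (k : V → V → ℝ) (hk : ∀ (a : F) v w, k (v + a • w) w = k v w) :
    ∑ v, (∑ w, k v w) ^ 2 ≤ (∑ v, ∑ w, k v w) ^ 2 / (Fintype.card V : ℝ) +
      (Fintype.card V : ℝ) / (Fintype.card F : ℝ) * ∑ v, ∑ w, k v w ^ 2 := by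
  classical
  set N : ℝ := (Fintype.card V : ℝ) with hN
  set q : ℝ := (Fintype.card F : ℝ) with hq
  have hNpos : 0 < N := by
    rw [hN]; exact_mod_cast Fintype.card_pos_iff.2 ⟨(0 : V)⟩
  have hqpos : 0 < q := by
    rw [hq]; exact_mod_cast Fintype.card_pos_iff.2 ⟨(0 : F)⟩
  set s : V → ℝ := fun v => ∑ w, k v w with hs
  set m : ℝ := (∑ v, s v) / N with hm
  set c : V → ℝ := fun v => s v - m with hc
  set X : ℝ := ∑ v, c v ^ 2 with hX
  set K : ℝ := ∑ v, ∑ w, k v w ^ 2 with hK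
  have hX0 : 0 ≤ X := Finset.sum_nonneg fun _ _ => sq_nonneg _
  have hK0 : 0 ≤ K := Finset.sum_nonneg fun _ _ => Finset.sum_nonneg fun _ _ => sq_nonneg _
  have h0 : ∑ v, c v = 0 := by
    simp only [hc, Finset.sum_sub_distrib, Finset.sum_const, Finset.card_univ, nsmul_eq_mul]
    rw [← hN, hm]; field_simp; ring
  have hcs : ∑ v, c v * s v = X := by
    have : ∀ v, c v * s v = c v ^ 2 + m * c v := fun v => by simp only [hc]; ring
    simp only [this, Finset.sum_add_distrib, ← Finset.mul_sum, h0]; simp [hX]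
  have h1 : ∑ v, s v ^ 2 = X + (∑ v, s v) ^ 2 / N := by
    have : ∀ v, s v ^ 2 = c v * s v + m * s v := fun v => by simp only [hc]; ring
    simp only [this, Finset.sum_add_distrib, ← Finset.mul_sum, hcs, hm]; ring
  -- invariance of `k` under the shear `v ↦ v + a • w`
  have h2 : ∀ a : F, ∑ v, ∑ w, k v w * c (v + a • w) = X := by
    intro a
    rw [Finset.sum_comm]
    have : ∀ w, ∑ v, k v w * c (v + a • w) = ∑ v, k v w * c v := by
      intro w
      rw [← Equiv.sum_comp (Equiv.addRight (a • w)) (fun v => k v w * c v)]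
      simp [hk]
    simp only [this]
    rw [Finset.sum_comm, ← hcs]
    refine Finset.sum_congr rfl fun v _ => ?_
    rw [← Finset.sum_mul, mul_comm]
  have h3 : ∑ p : V × V, k p.1 p.2 * ∑ a : F, c (p.1 + a • p.2) = q * X := by
    simp only [Finset.mul_sum]
    rw [Finset.sum_comm]
    simp only [Fintype.sum_prod_type, h2]
    simp [hq]
  have h4 := Finset.sum_mul_sq_le_sq_mul_sq Finset.univ (fun p : V × V => k p.1 p.2)
    (fun p => ∑ a : F, c (p.1 + a • p.2))
  -- pairwise independence: only the diagonal `a = b` contributes, since `∑ v, c v = 0`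
  have h5 : ∑ p : V × V, (∑ a : F, c (p.1 + a • p.2)) ^ 2 = q * (N * X) := by
    have e1 : ∀ p : V × V, (∑ a : F, c (p.1 + a • p.2)) ^ 2 =
        ∑ a : F, ∑ b : F, c (p.1 + a • p.2) * c (p.1 + b • p.2) := by
      intro p; rw [sq, Finset.sum_mul_sum]
    simp only [e1]
    rw [Finset.sum_comm]
    have e2 : ∀ a : F, ∑ p : V × V, ∑ b : F, c (p.1 + a • p.2) * c (p.1 + b • p.2) = N * X := by
      intro a
      rw [Finset.sum_comm]
      have e3 : ∀ b : F, ∑ p : V × V, c (p.1 + a • p.2) * c (p.1 + b • p.2) =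
          if b = a then N * X else 0 := by
        intro b
        have e4 : ∑ p : V × V, c (p.1 + a • p.2) * c (p.1 + b • p.2) =
            ∑ v, ∑ w, c v * c ((b - a) • w + v) := by
          rw [Fintype.sum_prod_type, Finset.sum_comm]
          conv_rhs => rw [Finset.sum_comm]
          refine Finset.sum_congr rfl fun w _ => ?_
          rw [← Equiv.sum_comp (Equiv.addRight (a • w)) (fun v => c v * c ((b - a) • w + v))]
          refine Finset.sum_congr rfl fun v _ => ?_
          simp only [Equiv.coe_addRight]
          congr 2
          module
        rw [e4]
        split_ifs with hab
        · subst hab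
          simp only [sub_self, zero_smul, zero_add, Finset.sum_const, Finset.card_univ,
            nsmul_eq_mul, ← Finset.mul_sum]
          rw [hX, ← hN]; congr 1
          exact Finset.sum_congr rfl fun v _ => (sq _).symm
        · have hne : b - a ≠ 0 := sub_ne_zero.2 hab
          refine Finset.sum_eq_zero fun v _ => ?_
          rw [← Finset.mul_sum]
          have := Equiv.sum_comp
            ((LinearEquiv.smulOfNeZero F V (b - a) hne).toEquiv.trans (Equiv.addRight v)) c
          simp only [Equiv.trans_apply, Equiv.coe_addRight, LinearEquiv.coe_toEquiv,
            LinearEquiv.smulOfNeZero_apply] at this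
          rw [this, h0, mul_zero]
      simp only [e3]; simp
    simp only [e2]; simp [hq]
  rw [h3, h5, Fintype.sum_prod_type] at h4
  have h6 : X ≤ N / q * K := by
    rcases hX0.eq_or_lt with h | h
    · rw [← h]; positivity
    · have : q * X * (q * X) ≤ (N * K) * (q * X) := by
        calc _ = (q * X) ^ 2 := by ring
          _ ≤ _ := h4
          _ = _ := by rw [hK]; ring
      have := le_of_mul_le_mul_right this (by positivity)
      rw [div_mul_eq_mul_div, le_div_iff₀ hqpos]; linarith
  rw [h1]; linarith

/-- For a shear-invariant indicator `f` of triples `(u, v, w)`, two triples sharing a random pair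
`(u, v)` are almost independent. Here `expand_step` is applied first in `v`, with `u` fixed, and
then in `u`. -/
lemma expand_triple {F V : Type} [Field F] [Fintype F] [AddCommGroup V] [Module F V] [Fintype V]
    (f : V → V → V → ℝ) (hf : ∀ u v w, f u v w ^ 2 = f u v w)
    (h₁ : ∀ (a : F) u v w, f (u + a • w) v w = f u v w)
    (h₂ : ∀ (a : F) u v w, f u (v + a • w) w = f u v w) :
    ∑ u, ∑ v, (∑ w, f u v w) ^ 2 ≤
      (∑ u, ∑ v, ∑ w, f u v w) ^ 2 / (Fintype.card V : ℝ) ^ 2 +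
      2 * (Fintype.card V : ℝ) / (Fintype.card F : ℝ) * ∑ u, ∑ v, ∑ w, f u v w := by
  set N : ℝ := (Fintype.card V : ℝ) with hN
  set q : ℝ := (Fintype.card F : ℝ) with hq
  have hNpos : 0 < N := by
    rw [hN]; exact_mod_cast Fintype.card_pos_iff.2 ⟨(0 : V)⟩
  have hqpos : 0 < q := by
    rw [hq]; exact_mod_cast Fintype.card_pos_iff.2 ⟨(0 : F)⟩
  set S := ∑ u, ∑ v, ∑ w, f u v w with hS
  have hA : ∑ u, ∑ v, (∑ w, f u v w) ^ 2 ≤ (∑ u, (∑ v, ∑ w, f u v w) ^ 2) / N + N / q * S := by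
    have := Finset.sum_le_sum (s := Finset.univ)
      fun u (_ : u ∈ Finset.univ) => expand_step (F := F) (f u) (fun a v w => h₂ a u v w)
    refine this.trans (le_of_eq ?_)
    rw [Finset.sum_add_distrib, ← Finset.sum_div, ← Finset.mul_sum]
    simp only [hf]; rfl
  have hB := expand_step (F := F) (fun u w => ∑ v, f u v w)
    (fun a u w => Finset.sum_congr rfl fun v _ => h₁ a u v w)
  have e1 : ∀ u, ∑ w, ∑ v, f u v w = ∑ v, ∑ w, f u v w := fun u => Finset.sum_comm
  have e2 : ∑ u, ∑ w, (∑ v, f u v w) ^ 2 ≤ N * S := by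
    rw [hS, Finset.mul_sum]
    refine Finset.sum_le_sum fun u _ => ?_
    rw [← e1 u, Finset.mul_sum]
    refine Finset.sum_le_sum fun w _ => ?_
    have := sq_sum_le_card_mul_sum_sq (s := Finset.univ) (f := fun v => f u v w)
    simpa only [hf, Finset.card_univ] using this
  simp only [e1] at hB
  have hC : ∑ u, (∑ v, ∑ w, f u v w) ^ 2 ≤ S ^ 2 / N + N / q * (N * S) :=
    hB.trans (by rw [← hS]; gcongr)
  calc _ ≤ _ := hA
    _ ≤ (S ^ 2 / N + N / q * (N * S)) / N + N / q * S := by gcongr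
    _ = _ := by field_simp; ring

/-! ### Fibre counting and Schwartz–Zippel -/

lemma ncard_of_fiber {α β : Type*} [Finite α] [Finite β] (φ : α → β) (A : Set α) (B : Set β)
    (K : ℕ) (hmap : ∀ a ∈ A, φ a ∈ B) (hK : ∀ b ∈ B, {a ∈ A | φ a = b}.ncard = K) :
    A.ncard = B.ncard * K := by
  classical
  have := Fintype.ofFinite α
  have := Fintype.ofFinite β
  rw [Set.ncard_eq_toFinset_card' A, Set.ncard_eq_toFinset_card' B,
    Finset.card_eq_sum_card_fiberwise (f := φ) (t := B.toFinset)
      (fun a ha => by simpa using hmap a (by simpa using ha))]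
  rw [Finset.sum_congr rfl (g := fun _ => K), Finset.sum_const, smul_eq_mul]
  intro b hb
  rw [← hK b (by simpa using hb), Set.ncard_eq_toFinset_card']
  congr 1
  ext a; simp

/-- Schwartz–Zippel on a parametrised affine subspace: a polynomial of degree at most `d` that does
not vanish on `x + span(e)` vanishes for at most a `d / q` fraction of the parameters. The vectors
`e i` may be dependent. -/
lemma sz_param {F : Type} [Field F] [Fintype F] {n d m : ℕ} (p : MvPolynomial (Fin n) F)
    (hp : p.totalDegree ≤ d) (x : Fin n → F) (e : Fin (m + 1) → (Fin n → F))
    (hne : ∃ c : Fin (m + 1) → F, eval (x + ∑ i, c i • e i) p ≠ 0) :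
    (({c : Fin (m + 1) → F | eval (x + ∑ i, c i • e i) p = 0}.ncard : ℕ) : ℝ) ≤
      d * (Fintype.card F : ℝ) ^ m := by
  classical
  -- the affine linear forms of the parametrisation, substituted for the variables of `p`
  set L : Fin n → MvPolynomial (Fin (m + 1)) F :=
    fun j => C (x j) + ∑ i, C (e i j) * X i with hL
  have hLd : ∀ j, (L j).totalDegree ≤ 1 := by
    intro j
    refine (totalDegree_add _ _).trans (max_le (by simp) ?_)
    refine totalDegree_finsetSum_le fun i _ => ?_
    refine (totalDegree_mul _ _).trans ?_
    simp [totalDegree_X]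
  set P := aeval L p with hP
  have hev : ∀ c, eval c P = eval (x + ∑ i, c i • e i) p := by
    intro c
    have : eval c P = eval (fun j => eval c (L j)) p := by
      rw [hP, aeval_def, ← coe_eval₂Hom, ← RingHom.comp_apply]
      refine congrArg (fun φ : MvPolynomial (Fin n) F →+* F => φ p) ?_
      ext <;> simp
    rw [this]
    congr 2
    funext j
    simp [hL, mul_comm]
  have hPd : P.totalDegree ≤ d := by
    rw [hP, aeval_def, eval₂_eq]
    refine totalDegree_finsetSum_le fun s hs => ?_
    refine (totalDegree_mul _ _).trans ?_
    have h1 : (algebraMap F (MvPolynomial (Fin (m + 1)) F) (coeff s p)).totalDegree = 0 := by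
      rw [algebraMap_eq, totalDegree_C]
    rw [h1, zero_add]
    refine (totalDegree_finsetProd _ _).trans ?_
    refine le_trans (Finset.sum_le_sum (g := fun i => s i) fun i _ => ?_) ?_
    · refine (totalDegree_pow _ _).trans ?_
      calc _ ≤ s i * 1 := Nat.mul_le_mul_left _ (hLd i)
        _ = _ := mul_one _
    · exact (le_totalDegree hs).trans hp
  obtain ⟨c₀, hc₀⟩ := hne
  have hP0 : P ≠ 0 := by
    intro h; apply hc₀; rw [← hev, h]; simp
  have hz := schwartz_zippel_totalDegree hP0 (Finset.univ : Finset F)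
  have hq : 0 < Fintype.card F := Fintype.card_pos
  have hz' := (NNRat.cast_le (K := ℝ)).2 hz
  push_cast at hz'
  rw [Finset.card_univ, div_le_div_iff₀ (by positivity) (by positivity)] at hz'
  have hcard : {c : Fin (m + 1) → F | eval (x + ∑ i, c i • e i) p = 0}.ncard =
      ({f ∈ Fintype.piFinset fun _ : Fin (m + 1) => (Finset.univ : Finset F) |
        eval f P = 0}).card := by
    rw [Set.ncard_eq_toFinset_card']
    congr 1
    ext c; simp [hev]
  rw [hcard]
  have hqr : (0 : ℝ) < Fintype.card F := by exact_mod_cast hq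
  refine le_of_mul_le_mul_right (hz'.trans ?_) hqr
  have : (P.totalDegree : ℝ) ≤ d := by exact_mod_cast hPd
  calc _ ≤ (d : ℝ) * (Fintype.card F : ℝ) ^ (m + 1) := by gcongr
    _ = _ := by ring

/-! ### Cubes given by a point and three vectors -/

/-- The affine subspace `x + span(u, v, w)`; it is a cube exactly when `u, v, w` are linearly
independent. -/
def cub {F : Type} [Field F] {n : ℕ} (x u v w : Fin n → F) :
    AffineSubspace F (Fin n → F) :=
  AffineSubspace.mk' x (Submodule.span F {u, v, w})

section geometry
variable {F : Type} [Field F] {n : ℕ}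

lemma mem_cub (x u v w z : Fin n → F) : z ∈ cub x u v w ↔ z - x ∈ Submodule.span F {u, v, w} := by
  simp [cub, AffineSubspace.mem_mk']

lemma self_mem_cub (x u v w : Fin n → F) : x ∈ cub x u v w := by simp [mem_cub]

lemma direction_cub (x u v w : Fin n → F) :
    (cub x u v w).direction = Submodule.span F {u, v, w} := by simp [cub]

lemma isCube_cub [Fintype F] (x u v w : Fin n → F) :
    IsCube F n (cub x u v w) ↔ Module.finrank F (Submodule.span F {u, v, w}) = 3 := by
  rw [IsCube, direction_cub]
  exact and_iff_right ⟨x, self_mem_cub x u v w⟩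

lemma cub_eq_iff {x u v w : Fin n → F} {C : AffineSubspace F (Fin n → F)} (hx : x ∈ C) :
    cub x u v w = C ↔ Submodule.span F {u, v, w} = C.direction := by
  rw [AffineSubspace.eq_iff_direction_eq_of_mem (self_mem_cub x u v w) hx, direction_cub]

lemma finrank_span_pair_le (u v : Fin n → F) :
    Module.finrank F (Submodule.span F {u, v}) ≤ 2 := by
  classical
  refine (finrank_span_le_card (R := F) ({u, v} : Set (Fin n → F))).trans ?_
  simp only [Set.toFinset_insert, Set.toFinset_singleton]
  exact Finset.card_le_two

lemma finrank_span_triple_le (u v w : Fin n → F) :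
    Module.finrank F (Submodule.span F {u, v, w}) ≤ 3 := by
  classical
  refine (finrank_span_le_card (R := F) ({u, v, w} : Set (Fin n → F))).trans ?_
  simp only [Set.toFinset_insert, Set.toFinset_singleton]
  exact Finset.card_le_three

lemma finrank_span_insert_gt (s : Set (Fin n → F)) {v : Fin n → F} (h : v ∉ Submodule.span F s) :
    Module.finrank F (Submodule.span F s) < Module.finrank F (Submodule.span F (insert v s)) := by
  apply Submodule.finrank_lt_finrank_of_lt
  refine lt_of_le_of_ne (Submodule.span_mono (Set.subset_insert _ _)) fun he => h ?_
  rw [he]; exact Submodule.subset_span (Set.mem_insert _ _)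

lemma finrank_span_pair {u v : Fin n → F} (hu : u ≠ 0) (hv : v ∉ Submodule.span F {u}) :
    Module.finrank F (Submodule.span F {u, v}) = 2 := by
  refine le_antisymm (finrank_span_pair_le u v) ?_
  have h1 := finrank_span_singleton (K := F) hu
  have h2 := finrank_span_insert_gt {u} hv
  rw [Set.pair_comm] at h2
  omega

lemma finrank_span_triple {u v w : Fin n → F} (hu : u ≠ 0) (hv : v ∉ Submodule.span F {u})
    (hw : w ∉ Submodule.span F {u, v}) :
    Module.finrank F (Submodule.span F {u, v, w}) = 3 := by
  refine le_antisymm (finrank_span_triple_le u v w) ?_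
  have h1 := finrank_span_pair hu hv
  have h2 := finrank_span_insert_gt {u, v} hw
  rw [show ({u, v, w} : Set (Fin n → F)) = insert w {u, v} by ext; simp; tauto]
  omega

lemma span_triple_le_iff {u v w : Fin n → F} {W : Submodule F (Fin n → F)} :
    Submodule.span F {u, v, w} ≤ W ↔ u ∈ W ∧ v ∈ W ∧ w ∈ W := by
  rw [Submodule.span_le]; simp [Set.insert_subset_iff]

lemma mem_span_triple_1 (u v w : Fin n → F) : u ∈ Submodule.span F {u, v, w} :=
  Submodule.subset_span (by simp)
lemma mem_span_triple_2 (u v w : Fin n → F) : v ∈ Submodule.span F {u, v, w} :=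
  Submodule.subset_span (by simp)
lemma mem_span_triple_3 (u v w : Fin n → F) : w ∈ Submodule.span F {u, v, w} :=
  Submodule.subset_span (by simp)

lemma indep_of_finrank {u v w : Fin n → F}
    (h : Module.finrank F (Submodule.span F {u, v, w}) = 3) :
    u ≠ 0 ∧ v ∉ Submodule.span F {u} ∧ w ∉ Submodule.span F {u, v} := by
  refine ⟨?_, ?_, ?_⟩
  · rintro rfl
    have := Submodule.finrank_mono (R := F) (s := Submodule.span F {(0 : Fin n → F), v, w})
      (t := Submodule.span F {v, w})
      (span_triple_le_iff.2 ⟨by simp, Submodule.subset_span (by simp),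
        Submodule.subset_span (by simp)⟩)
    have := finrank_span_pair_le (F := F) v w
    omega
  · intro hv
    have := Submodule.finrank_mono (R := F) (s := Submodule.span F {u, v, w})
      (t := Submodule.span F {u, w})
      (span_triple_le_iff.2 ⟨Submodule.subset_span (by simp),
        Submodule.span_mono (by simp) hv, Submodule.subset_span (by simp)⟩)
    have := finrank_span_pair_le (F := F) u w
    omega
  · intro hw
    have := Submodule.finrank_mono (R := F) (s := Submodule.span F {u, v, w})
      (t := Submodule.span F {u, v})
      (span_triple_le_iff.2 ⟨Submodule.subset_span (by simp),
        Submodule.subset_span (by simp), hw⟩)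
    have := finrank_span_pair_le (F := F) u v
    omega

lemma span_pair_eq_of {u v : Fin n → F} {P : Submodule F (Fin n → F)}
    (hP : Module.finrank F P = 2) (hu : u ≠ 0) (hv : v ∉ Submodule.span F {u})
    (huP : u ∈ P) (hvP : v ∈ P) : Submodule.span F {u, v} = P := by
  refine Submodule.eq_of_le_of_finrank_le ?_ (by rw [hP, finrank_span_pair hu hv])
  rw [Submodule.span_le]; simp [Set.insert_subset_iff, huP, hvP]

lemma direction_inf_cub (x u v w w' : Fin n → F) :
    (cub x u v w ⊓ cub x u v w').direction =
      Submodule.span F {u, v, w} ⊓ Submodule.span F {u, v, w'} := by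
  rw [AffineSubspace.direction_inf_of_mem (self_mem_cub _ _ _ _) (self_mem_cub _ _ _ _),
    direction_cub, direction_cub]

variable [Fintype F]

lemma planePair_cub (x u v w w' : Fin n → F) :
    PlanePair F n (cub x u v w) (cub x u v w') ↔
      Module.finrank F (Submodule.span F {u, v, w}) = 3 ∧
      Module.finrank F (Submodule.span F {u, v, w'}) = 3 ∧
      Module.finrank F
        (Submodule.span F {u, v, w} ⊓ Submodule.span F {u, v, w'} : Submodule F _) = 2 := by
  rw [PlanePair, isCube_cub, isCube_cub, direction_inf_cub]
  have : ((cub x u v w ⊓ cub x u v w' : AffineSubspace F _) : Set (Fin n → F)).Nonempty :=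
    ⟨x, self_mem_cub _ _ _ _, self_mem_cub _ _ _ _⟩
  tauto

/-- For a plane pair given by `(x, u, v, w, w')`, the common plane is `x + span(u, v)`. -/
lemma span_inf_eq {x u v w w' : Fin n → F}
    (h : PlanePair F n (cub x u v w) (cub x u v w')) :
    Submodule.span F {u, v} =
      Submodule.span F {u, v, w} ⊓ Submodule.span F {u, v, w'} := by
  obtain ⟨h1, h2, h3⟩ := (planePair_cub x u v w w').1 h
  obtain ⟨hu, hv, -⟩ := indep_of_finrank h1
  exact span_pair_eq_of h3 hu hv
    ⟨mem_span_triple_1 _ _ _, mem_span_triple_1 _ _ _⟩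
    ⟨mem_span_triple_2 _ _ _, mem_span_triple_2 _ _ _⟩

/-- Two cubes through `x + span(u, v)` that are not a plane pair coincide, so `w'` is confined to a
3-dimensional space. -/
lemma mem_span_of_not_planePair {x u v w w' : Fin n → F}
    (h1 : IsCube F n (cub x u v w)) (h2 : IsCube F n (cub x u v w'))
    (h : ¬ PlanePair F n (cub x u v w) (cub x u v w')) :
    w' ∈ Submodule.span F {u, v, w} := by
  rw [isCube_cub] at h1 h2
  rw [planePair_cub] at h
  by_contra hw
  apply h
  refine ⟨h1, h2, ?_⟩
  obtain ⟨hu, hv, -⟩ := indep_of_finrank h1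
  have hge := Submodule.finrank_mono (R := F) (s := Submodule.span F {u, v})
    (t := Submodule.span F {u, v, w} ⊓ Submodule.span F {u, v, w'})
    (by rw [Submodule.span_le]
        simp [Set.insert_subset_iff, mem_span_triple_1, mem_span_triple_2])
  rw [finrank_span_pair hu hv] at hge
  have hlt : Module.finrank F
      (Submodule.span F {u, v, w} ⊓ Submodule.span F {u, v, w'} : Submodule F _) <
      Module.finrank F (Submodule.span F {u, v, w'}) := by
    apply Submodule.finrank_lt_finrank_of_lt
    refine lt_of_le_of_ne inf_le_right fun he => hw ?_
    have := mem_span_triple_3 (F := F) u v w'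
    rw [← he] at this
    exact this.1
  omega

/-- Linearly independent quadruples give plane pairs. -/
lemma planePair_of_indep {x u v w w' : Fin n → F} (hu : u ≠ 0) (hv : v ∉ Submodule.span F {u})
    (hw : w ∉ Submodule.span F {u, v}) (hw' : w' ∉ Submodule.span F {u, v, w}) :
    PlanePair F n (cub x u v w) (cub x u v w') := by
  by_contra h
  refine hw' (mem_span_of_not_planePair ?_ ?_ h)
  · exact (isCube_cub _ _ _ _).2 (finrank_span_triple hu hv hw)
  · refine (isCube_cub _ _ _ _).2 (finrank_span_triple hu hv fun h => hw' ?_)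
    exact Submodule.span_mono (by intro; simp; tauto) h

end geometry

/-! ### Counting parametrisations -/

section fibres
variable {F : Type} [Field F] [Fintype F] {n : ℕ}

lemma ncard_submodule (W : Submodule F (Fin n → F)) :
    (W : Set (Fin n → F)).ncard = Fintype.card F ^ Module.finrank F W := by
  rw [← Nat.card_coe_set_eq, ← Nat.card_eq_fintype_card]
  exact Module.natCard_eq_pow_finrank (K := F) (V := W)

lemma ncard_affineSubspace {C : AffineSubspace F (Fin n → F)} {x : Fin n → F} (hx : x ∈ C) :
    (C : Set (Fin n → F)).ncard = Fintype.card F ^ Module.finrank F C.direction := by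
  rw [← ncard_submodule, ← Set.ncard_image_of_injective (C.direction : Set (Fin n → F))
    (add_right_injective x)]
  congr 1
  ext z
  simp only [SetLike.mem_coe, Set.mem_image]
  constructor
  · intro hz
    exact ⟨z - x, AffineSubspace.vsub_mem_direction hz hx, by simp⟩
  · rintro ⟨u, hu, rfl⟩
    have := AffineSubspace.vadd_mem_of_mem_direction hu hx
    simpa [add_comm] using this

/-- The number of bases of a 3-dimensional space depends only on `q`. -/
lemma ncard_span_eq (W : Submodule F (Fin n → F)) (hW : Module.finrank F W = 3) :
    {t : (Fin n → F) × (Fin n → F) × (Fin n → F) |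
      Submodule.span F {t.1, t.2.1, t.2.2} = W}.ncard =
      ∏ i : Fin 3, (Fintype.card F ^ 3 - Fintype.card F ^ (i : ℕ)) := by
  have h := card_linearIndependent (K := F) (V := W) (k := 3) hW.ge
  rw [hW] at h
  rw [← h, ← Set.ncard_univ]
  set φ : {s : Fin 3 → W // LinearIndependent F s} →
    (Fin n → F) × (Fin n → F) × (Fin n → F) := fun s => (s.1 0, s.1 1, s.1 2) with hφ
  have hinj : Function.Injective φ := by
    intro s t hst
    simp only [hφ, Prod.mk.injEq, SetLike.coe_eq_coe] at hst
    apply Subtype.ext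
    funext i
    fin_cases i
    exacts [hst.1, hst.2.1, hst.2.2]
  rw [← Set.ncard_image_of_injective _ hinj]
  congr 1
  have hr : ∀ s : Fin 3 → (Fin n → F), Set.range s = {s 0, s 1, s 2} := by
    intro s
    ext z
    simp only [Set.mem_range, Fin.exists_fin_succ, Set.mem_insert_iff, Set.mem_singleton_iff]
    simp [eq_comm]
  ext ⟨u, v, w⟩
  simp only [Set.mem_ofPred_eq, Set.image_univ, Set.mem_range]
  constructor
  · intro hs
    have hu : u ∈ W := hs ▸ mem_span_triple_1 u v w
    have hv : v ∈ W := hs ▸ mem_span_triple_2 u v w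
    have hw : w ∈ W := hs ▸ mem_span_triple_3 u v w
    refine ⟨⟨![⟨u, hu⟩, ⟨v, hv⟩, ⟨w, hw⟩], ?_⟩, rfl⟩
    refine LinearIndependent.of_comp W.subtype ?_
    rw [linearIndependent_iff_card_eq_finrank_span, Set.finrank, hr]
    have hf : 3 = Module.finrank F (Submodule.span F {u, v, w}) := by rw [hs, hW]
    rw [Fintype.card_fin]
    exact hf
  · rintro ⟨⟨s, hs⟩, hst⟩
    simp only [hφ, Prod.mk.injEq] at hst
    obtain ⟨rfl, rfl, rfl⟩ := hst
    have h1 := hs.map' W.subtype W.ker_subtype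
    have h2 := finrank_span_eq_card h1
    rw [hr] at h2
    refine Submodule.eq_of_le_of_finrank_le ?_ ?_
    · exact span_triple_le_iff.2 ⟨(s 0).2, (s 1).2, (s 2).2⟩
    · rw [hW]; exact h2.ge

/-- Each cube through `x` is `x + span(u, v, w)` for the same number of triples. -/
lemma ncard_triples (x : Fin n → F) (A : Set (AffineSubspace F (Fin n → F)))
    (hA : A ⊆ cubesOn F n x) :
    {t : (Fin n → F) × (Fin n → F) × (Fin n → F) | cub x t.1 t.2.1 t.2.2 ∈ A}.ncard =
      A.ncard * ∏ i : Fin 3, (Fintype.card F ^ 3 - Fintype.card F ^ (i : ℕ)) := by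
  refine ncard_of_fiber
    (fun t : (Fin n → F) × (Fin n → F) × (Fin n → F) => cub x t.1 t.2.1 t.2.2)
    {t | cub x t.1 t.2.1 t.2.2 ∈ A} A _ (fun t ht => ht) ?_
  intro C hC
  rw [← ncard_span_eq C.direction (hA hC).1.2]
  congr 1
  ext t
  simp only [Set.mem_ofPred_eq]
  rw [cub_eq_iff (hA hC).2]
  constructor
  · exact fun h => h.2
  · intro h
    refine ⟨?_, h⟩
    rwa [(cub_eq_iff (hA hC).2).2 h]

/-- The pair of cubes and pair of points described by a base point `x` and vectors `u, v, w, w'`: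
the cubes `x + span(u, v, w)` and `x + span(u, v, w')` with the points `x` and `x + u`. It lies in
`OmegaD` exactly when the two cubes meet in a plane. -/
def toOmega (t : (Fin n → F) × (Fin n → F) × (Fin n → F) × (Fin n → F) × (Fin n → F)) :
    (AffineSubspace F (Fin n → F) × AffineSubspace F (Fin n → F)) ×
      (Fin n → F) × (Fin n → F) :=
  ((cub t.1 t.2.1 t.2.2.1 t.2.2.2.1, cub t.1 t.2.1 t.2.2.1 t.2.2.2.2), t.1, t.1 + t.2.1)

/-- Each point of the sample space is described by the same number of quintuples: `v` ranges over
the direction of the common plane minus a line, and `w`, `w'` over the directions of the two cubes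
minus that of the plane. -/
lemma ncard_tuples (E : Set ((AffineSubspace F (Fin n → F) × AffineSubspace F (Fin n → F)) ×
      (Fin n → F) × (Fin n → F))) (hE : E ⊆ OmegaD F n) :
    {t | toOmega t ∈ E}.ncard =
      E.ncard * ((Fintype.card F ^ 2 - Fintype.card F) *
        ((Fintype.card F ^ 3 - Fintype.card F ^ 2) *
          (Fintype.card F ^ 3 - Fintype.card F ^ 2))) := by
  refine ncard_of_fiber toOmega _ _ _ (fun t ht => ht) ?_
  rintro ⟨⟨C₁, C₂⟩, x, y⟩ hω
  obtain ⟨⟨hC₁, hC₂, -, hP⟩, hx₁, hx₂, hy₁, hy₂, hxy⟩ := hE hω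
  simp only at hC₁ hC₂ hP hx₁ hx₂ hy₁ hy₂ hxy
  rw [AffineSubspace.direction_inf_of_mem hx₁ hx₂] at hP
  have hu : y - x ≠ 0 := sub_ne_zero.2 hxy.symm
  have huP : y - x ∈ C₁.direction ⊓ C₂.direction :=
    ⟨AffineSubspace.vsub_mem_direction hy₁ hx₁, AffineSubspace.vsub_mem_direction hy₂ hx₂⟩
  set P := C₁.direction ⊓ C₂.direction with hPdef
  have key : {t | t ∈ {t | toOmega t ∈ E} ∧ toOmega t = ((C₁, C₂), x, y)} =
      (fun s : (Fin n → F) × (Fin n → F) × (Fin n → F) => (x, y - x, s)) ''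
        (((P : Set (Fin n → F)) \ (Submodule.span F {y - x} : Submodule F (Fin n → F))) ×ˢ
          ((C₁.direction : Set (Fin n → F)) \ P) ×ˢ ((C₂.direction : Set (Fin n → F)) \ P)) := by
    ext ⟨x', u, v, w, w'⟩
    simp only [Set.mem_ofPred_eq, toOmega, Prod.mk.injEq, Set.mem_image, Set.mem_prod,
      Set.mem_sdiff, SetLike.mem_coe, Prod.exists]
    constructor
    · rintro ⟨-, ⟨h1, h2⟩, rfl, rfl⟩
      rw [cub_eq_iff hx₁] at h1
      rw [cub_eq_iff hx₂] at h2
      refine ⟨v, w, w', ⟨⟨⟨?_, ?_⟩, ?_⟩, ⟨?_, ?_⟩, ?_, ?_⟩, rfl, by simp, rfl, rfl, rfl⟩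
      · exact h1 ▸ mem_span_triple_2 u v w
      · exact h2 ▸ mem_span_triple_2 u v w'
      · rw [add_sub_cancel_left]
        exact (indep_of_finrank (by rw [h1]; exact hC₁.2)).2.1
      · exact h1 ▸ mem_span_triple_3 u v w
      · intro hw
        have hle : Submodule.span F {u, v, w} ≤ P := span_triple_le_iff.2
          ⟨⟨h1 ▸ mem_span_triple_1 u v w, h2 ▸ mem_span_triple_1 u v w'⟩,
            ⟨h1 ▸ mem_span_triple_2 u v w, h2 ▸ mem_span_triple_2 u v w'⟩, hw⟩
        have := Submodule.finrank_mono hle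
        rw [h1, hC₁.2, hP] at this
        omega
      · exact h2 ▸ mem_span_triple_3 u v w'
      · intro hw
        have hle : Submodule.span F {u, v, w'} ≤ P := span_triple_le_iff.2
          ⟨⟨h1 ▸ mem_span_triple_1 u v w, h2 ▸ mem_span_triple_1 u v w'⟩,
            ⟨h1 ▸ mem_span_triple_2 u v w, h2 ▸ mem_span_triple_2 u v w'⟩, hw⟩
        have := Submodule.finrank_mono hle
        rw [h2, hC₂.2, hP] at this
        omega
    · rintro ⟨v, w, w', ⟨⟨hv, hv'⟩, ⟨hw, hw'⟩, hz, hz'⟩, rfl, rfl, rfl, rfl, rfl⟩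
      have hPe := span_pair_eq_of hP hu hv' huP hv
      have h1 : cub x (y - x) v w = C₁ := by
        rw [cub_eq_iff hx₁]
        refine Submodule.eq_of_le_of_finrank_le
          (span_triple_le_iff.2 ⟨huP.1, hv.1, hw⟩) ?_
        rw [hC₁.2, finrank_span_triple hu hv' (by rwa [hPe])]
      have h2 : cub x (y - x) v w' = C₂ := by
        rw [cub_eq_iff hx₂]
        refine Submodule.eq_of_le_of_finrank_le
          (span_triple_le_iff.2 ⟨huP.2, hv.2, hz⟩) ?_
        rw [hC₂.2, finrank_span_triple hu hv' (by rwa [hPe])]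
      rw [h1, h2, add_sub_cancel]
      exact ⟨hω, ⟨rfl, rfl⟩, rfl, rfl⟩
  rw [key, Set.ncard_image_of_injective _ (fun a b h => by simpa using h), Set.ncard_prod,
    Set.ncard_prod, Set.ncard_sdiff, Set.ncard_sdiff, Set.ncard_sdiff, ncard_submodule,
    ncard_submodule, ncard_submodule, ncard_submodule, hP, hC₁.2, hC₂.2,
    finrank_span_singleton hu, pow_one]
  · exact inf_le_right
  · exact inf_le_left
  · exact (Submodule.span_singleton_le_iff_mem _ _).2 huP

/-- Each plane pair carries the same number of ordered pairs of distinct points of the plane. -/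
lemma ncard_omega_pairs
    (E : Set (AffineSubspace F (Fin n → F) × AffineSubspace F (Fin n → F)))
    (hE : ∀ p ∈ E, PlanePair F n p.1 p.2) :
    {ω ∈ OmegaD F n | ω.1 ∈ E}.ncard =
      E.ncard * (Fintype.card F ^ 2 * Fintype.card F ^ 2 - Fintype.card F ^ 2) := by
  classical
  refine ncard_of_fiber Prod.fst _ _ _ (fun t ht => ht.2) ?_
  rintro ⟨C₁, C₂⟩ hp
  obtain ⟨-, -, ⟨x, hx⟩, hP⟩ := id (hE _ hp)
  have key : {a | a ∈ {ω ∈ OmegaD F n | ω.1 ∈ E} ∧ a.1 = (C₁, C₂)} =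
      (fun z : (Fin n → F) × (Fin n → F) => ((C₁, C₂), z)) ''
        ((C₁ ⊓ C₂ : AffineSubspace F (Fin n → F)) : Set (Fin n → F)).offDiag := by
    ext ⟨⟨D₁, D₂⟩, y, z⟩
    simp only [Set.mem_ofPred_eq, Prod.mk.injEq, Set.mem_image, Set.mem_offDiag, SetLike.mem_coe,
      AffineSubspace.mem_inf_iff, Prod.exists, OmegaD]
    constructor
    · rintro ⟨⟨⟨-, h⟩, -⟩, rfl, rfl⟩
      exact ⟨y, z, ⟨⟨h.1, h.2.1⟩, ⟨h.2.2.1, h.2.2.2.1⟩, h.2.2.2.2⟩, ⟨rfl, rfl⟩, rfl, rfl⟩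
    · rintro ⟨y, z, ⟨⟨h1, h2⟩, ⟨h3, h4⟩, h5⟩, ⟨rfl, rfl⟩, rfl, rfl⟩
      exact ⟨⟨⟨hE _ hp, h1, h2, h3, h4, h5⟩, hp⟩, rfl, rfl⟩
  have hc := ncard_affineSubspace (F := F) (C := C₁ ⊓ C₂) hx
  rw [hP] at hc
  rw [key, Set.ncard_image_of_injective _ (fun a b h => by simpa using h)]
  rw [← hc, Set.ncard_eq_toFinset_card', Set.ncard_eq_toFinset_card', Set.toFinset_offDiag,
    Finset.offDiag_card]

end fibres

/-! ### Indicators and counting estimates -/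

open Classical in
/-- The real-valued indicator of a proposition. -/
noncomputable def ind (P : Prop) : ℝ := if P then 1 else 0

lemma ind_true {P : Prop} (h : P) : ind P = 1 := if_pos h
lemma ind_false {P : Prop} (h : ¬ P) : ind P = 0 := if_neg h
lemma ind_nonneg (P : Prop) : 0 ≤ ind P := by unfold ind; split_ifs <;> norm_num
lemma ind_sq (P : Prop) : ind P ^ 2 = ind P := by unfold ind; split_ifs <;> norm_num
lemma ind_le_one (P : Prop) : ind P ≤ 1 := by unfold ind; split_ifs <;> norm_num
lemma ind_mono {P Q : Prop} (h : P → Q) : ind P ≤ ind Q := by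
  by_cases hP : P
  · rw [ind_true hP, ind_true (h hP)]
  · rw [ind_false hP]; exact ind_nonneg Q
lemma ind_and (P Q : Prop) : ind (P ∧ Q) = ind P * ind Q := by
  by_cases hP : P <;> by_cases hQ : Q <;> simp [ind, hP, hQ]

lemma sum_ind {α : Type*} [Fintype α] (P : α → Prop) :
    ∑ a, ind (P a) = ({a | P a}.ncard : ℝ) := by
  classical
  rw [Set.ncard_eq_toFinset_card']
  simp only [ind, Finset.sum_boole]
  congr 2
  ext; simp

section counting
variable {F : Type} [Field F] {n : ℕ}

/-- Moving the base point inside the plane `x + span(u, v)` does not change the cube. -/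
lemma cub_shift (x u v w : Fin n → F) {y : Fin n → F} (hy : y ∈ Submodule.span F {u, v}) :
    cub (x + y) u v w = cub x u v w := by
  have hy' : y ∈ Submodule.span F {u, v, w} := Submodule.span_mono (by intro; simp; tauto) hy
  rw [cub_eq_iff (by rw [mem_cub]; simpa using hy'), direction_cub]

lemma cub_shear₁ (a : F) (x u v w : Fin n → F) : cub x (u + a • w) v w = cub x u v w := by
  rw [cub_eq_iff (self_mem_cub _ _ _ _), direction_cub]
  apply le_antisymm
  · exact span_triple_le_iff.2 ⟨add_mem (mem_span_triple_1 _ _ _)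
      (Submodule.smul_mem _ _ (mem_span_triple_3 _ _ _)), mem_span_triple_2 _ _ _,
      mem_span_triple_3 _ _ _⟩
  · refine span_triple_le_iff.2 ⟨?_, mem_span_triple_2 _ _ _, mem_span_triple_3 _ _ _⟩
    have := sub_mem (mem_span_triple_1 (F := F) (u + a • w) v w)
      (Submodule.smul_mem _ a (mem_span_triple_3 (F := F) (u + a • w) v w))
    simpa using this

lemma cub_swap (x u v w : Fin n → F) : cub x u v w = cub x v u w := by
  unfold cub; congr 2; ext; simp; tauto

lemma cub_shear₂ (a : F) (x u v w : Fin n → F) : cub x u (v + a • w) w = cub x u v w := by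
  rw [cub_swap, cub_shear₁, cub_swap]

lemma cub_comb (x u v w : Fin n → F) (c : Fin 3 → F) (hc : c 0 ≠ 0) :
    cub x (c 0 • u + (c 1 • v + c 2 • w)) v w = cub x u v w := by
  rw [cub_eq_iff (self_mem_cub _ _ _ _), direction_cub]
  set u' := c 0 • u + (c 1 • v + c 2 • w) with hu'
  apply le_antisymm
  · refine span_triple_le_iff.2 ⟨?_, mem_span_triple_2 _ _ _, mem_span_triple_3 _ _ _⟩
    exact add_mem (Submodule.smul_mem _ _ (mem_span_triple_1 _ _ _))
      (add_mem (Submodule.smul_mem _ _ (mem_span_triple_2 _ _ _))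
        (Submodule.smul_mem _ _ (mem_span_triple_3 _ _ _)))
  · refine span_triple_le_iff.2 ⟨?_, mem_span_triple_2 _ _ _, mem_span_triple_3 _ _ _⟩
    have h : u = (c 0)⁻¹ • (u' - (c 1 • v + c 2 • w)) := by
      rw [hu', add_sub_cancel_right, smul_smul, inv_mul_cancel₀ hc, one_smul]
    rw [h]
    exact Submodule.smul_mem _ _ (sub_mem (mem_span_triple_1 _ _ _)
      (add_mem (Submodule.smul_mem _ _ (mem_span_triple_2 _ _ _))
        (Submodule.smul_mem _ _ (mem_span_triple_3 _ _ _))))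

variable [Fintype F]

/-- A random point of a cube rarely lies on a hypersurface not containing the cube. The sum is
averaged over the substitutions `u ↦ c 0 • u + c 1 • v + c 2 • w` with `c 0 ≠ 0`, which preserve
the cube and move `x + u` over it. -/
lemma count_vanish {d : ℕ} (x : Fin n → F) (B : Set (AffineSubspace F (Fin n → F)))
    (p : AffineSubspace F (Fin n → F) → MvPolynomial (Fin n) F)
    (hd : ∀ C ∈ B, (p C).totalDegree ≤ d) (hne : ∀ C ∈ B, ∃ z ∈ C, eval z (p C) ≠ 0) :
    ((Fintype.card F : ℝ) - 1) * ∑ u, ∑ v, ∑ w,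
      ind (cub x u v w ∈ B ∧ eval (x + u) (p (cub x u v w)) = 0) ≤
      d * (Fintype.card (Fin n → F) : ℝ) ^ 3 := by
  classical
  set q : ℝ := (Fintype.card F : ℝ) with hq
  set N : ℝ := (Fintype.card (Fin n → F) : ℝ) with hN
  have hqpos : 0 < q := by
    rw [hq]; exact_mod_cast Fintype.card_pos_iff.2 ⟨(0 : F)⟩
  set P : (Fin n → F) → (Fin n → F) → (Fin n → F) → ℝ := fun u v w =>
    ind (cub x u v w ∈ B ∧ eval (x + u) (p (cub x u v w)) = 0) with hP
  set I : Finset (Fin 3 → F) := Fintype.piFinset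
    (fun i => if i = 0 then {0}ᶜ else Finset.univ) with hI
  have hmem : ∀ c ∈ I, c 0 ≠ 0 := by
    intro c hc
    have := Fintype.mem_piFinset.1 hc 0
    simpa using this
  have hIc : (I.card : ℝ) = (q - 1) * q ^ 2 := by
    rw [hI, Fintype.card_piFinset, Fin.prod_univ_three]
    simp only [Fin.isValue, if_true, one_ne_zero, if_false, Finset.card_univ,
      Finset.card_compl, Finset.card_singleton, Fin.reduceEq]
    rw [Nat.cast_mul, Nat.cast_mul, Nat.cast_sub Fintype.card_pos]
    simp only [← hq, Nat.cast_one]; ring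
  have h1 : ∀ c ∈ I, ∑ u, ∑ v, ∑ w, P (c 0 • u + (c 1 • v + c 2 • w)) v w =
      ∑ u, ∑ v, ∑ w, P u v w := by
    intro c hc
    have hc0 := hmem c hc
    rw [Finset.sum_comm]
    conv_rhs => rw [Finset.sum_comm]
    refine Finset.sum_congr rfl fun v _ => ?_
    rw [Finset.sum_comm]
    conv_rhs => rw [Finset.sum_comm]
    refine Finset.sum_congr rfl fun w _ => ?_
    have := Equiv.sum_comp ((LinearEquiv.smulOfNeZero F (Fin n → F) (c 0) hc0).toEquiv.trans
      (Equiv.addRight (c 1 • v + c 2 • w))) (fun u => P u v w)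
    exact this
  have h2 : ∀ u v w, ∑ c ∈ I, P (c 0 • u + (c 1 • v + c 2 • w)) v w ≤ d * q ^ 2 := by
    intro u v w
    by_cases hB : cub x u v w ∈ B
    · have hsz := sz_param (m := 2) (p (cub x u v w)) (hd _ hB) x ![u, v, w] (by
        obtain ⟨z, hz, hz0⟩ := hne _ hB
        rw [mem_cub, Submodule.mem_span_triple] at hz
        obtain ⟨a, b, c, habc⟩ := hz
        refine ⟨![a, b, c], ?_⟩
        have : x + ∑ i, ![a, b, c] i • ![u, v, w] i = z := by
          simp [Fin.sum_univ_three, habc]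
        rwa [this])
      rw [← sum_ind, ← hq] at hsz
      have hle : ∀ c ∈ I, P (c 0 • u + (c 1 • v + c 2 • w)) v w ≤
          ind (eval (x + ∑ i, c i • ![u, v, w] i) (p (cub x u v w)) = 0) := by
        intro c hc
        have he : x + ∑ i, c i • ![u, v, w] i = x + (c 0 • u + (c 1 • v + c 2 • w)) := by
          rw [Fin.sum_univ_three, add_assoc]; rfl
        rw [he]
        simp only [hP]
        rw [cub_comb x u v w c (hmem c hc)]
        exact ind_mono fun h => h.2
      exact ((Finset.sum_le_sum hle).trans (Finset.sum_le_sum_of_subset_of_nonneg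
        (Finset.subset_univ _) fun _ _ _ => ind_nonneg _)).trans hsz
    · rw [Finset.sum_eq_zero]
      · positivity
      · intro c hc
        simp only [hP]
        rw [cub_comb x u v w c (hmem c hc)]
        exact ind_false fun h => hB h.1
  have h3 : (I.card : ℝ) * ∑ u, ∑ v, ∑ w, P u v w ≤ N ^ 3 * (d * q ^ 2) := by
    rw [← nsmul_eq_mul, ← Finset.sum_const, ← Finset.sum_congr rfl h1, Finset.sum_comm]
    calc _ ≤ ∑ u : Fin n → F, ∑ v : Fin n → F, ∑ w : Fin n → F, (d * q ^ 2 : ℝ) := by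
          refine Finset.sum_le_sum fun u _ => ?_
          rw [Finset.sum_comm]
          refine Finset.sum_le_sum fun v _ => ?_
          rw [Finset.sum_comm]
          exact Finset.sum_le_sum fun w _ => h2 u v w
      _ = _ := by
        simp only [Finset.sum_const, Finset.card_univ, nsmul_eq_mul]
        rw [← hN]; ring
  rw [hIc] at h3
  have hq2 : 0 < q ^ 2 := by positivity
  refine le_of_mul_le_mul_right (le_trans (le_of_eq ?_) (h3.trans (le_of_eq ?_))) hq2
  · ring
  · ring

/-- If two table entries differ on the common plane, they agree at few of its points. The sum over
`x` is averaged over the translations by `span(u, v)`, which preserve both cubes. -/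
lemma count_point_agree {d : ℕ} (T : AffineSubspace F (Fin n → F) → (Fin n → F) → F)
    (hT : DegTable F n d T) (u v w w' : Fin n → F) :
    (Fintype.card F : ℝ) * ∑ x, ind (PlanePair F n (cub x u v w) (cub x u v w') ∧
      ¬ Agrees F n T (cub x u v w) (cub x u v w') ∧
      T (cub x u v w) x = T (cub x u v w') x) ≤ d * (Fintype.card (Fin n → F) : ℝ) := by
  classical
  set q : ℝ := (Fintype.card F : ℝ) with hq
  set N : ℝ := (Fintype.card (Fin n → F) : ℝ) with hN
  have hqpos : 0 < q := by
    rw [hq]; exact_mod_cast Fintype.card_pos_iff.2 ⟨(0 : F)⟩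
  set P : (Fin n → F) → ℝ := fun x => ind (PlanePair F n (cub x u v w) (cub x u v w') ∧
      ¬ Agrees F n T (cub x u v w) (cub x u v w') ∧
      T (cub x u v w) x = T (cub x u v w') x) with hP
  have hsp : ∀ c : Fin 2 → F, ∑ i, c i • ![u, v] i ∈ Submodule.span F {u, v} := by
    intro c
    rw [Submodule.mem_span_pair]
    exact ⟨c 0, c 1, by simp [Fin.sum_univ_two]⟩
  have h1 : ∀ c : Fin 2 → F, ∑ x, P (x + ∑ i, c i • ![u, v] i) = ∑ x, P x := by
    intro c
    exact Equiv.sum_comp (Equiv.addRight (∑ i, c i • ![u, v] i)) P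
  have h2 : ∀ x, ∑ c : Fin 2 → F, P (x + ∑ i, c i • ![u, v] i) ≤ d * q := by
    intro x
    have hPs : ∀ c : Fin 2 → F, P (x + ∑ i, c i • ![u, v] i) =
        ind (PlanePair F n (cub x u v w) (cub x u v w') ∧
          ¬ Agrees F n T (cub x u v w) (cub x u v w') ∧
          T (cub x u v w) (x + ∑ i, c i • ![u, v] i) =
            T (cub x u v w') (x + ∑ i, c i • ![u, v] i)) := by
      intro c
      simp only [hP]
      rw [cub_shift x u v w (hsp c), cub_shift x u v w' (hsp c)]
    simp only [hPs]
    by_cases hpp : PlanePair F n (cub x u v w) (cub x u v w') ∧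
          ¬ Agrees F n T (cub x u v w) (cub x u v w')
    · obtain ⟨hpp, hna⟩ := hpp
      obtain ⟨p₁, hp₁, hT₁⟩ := hT _ hpp.1
      obtain ⟨p₂, hp₂, hT₂⟩ := hT _ hpp.2.1
      have hin : ∀ (c : Fin 2 → F) (w : Fin n → F), x + ∑ i, c i • ![u, v] i ∈ cub x u v w := by
        intro c w
        rw [mem_cub, add_sub_cancel_left]
        exact Submodule.span_mono (by intro; simp; tauto) (hsp c)
      have hsz := sz_param (d := d) (m := 1) (p₁ - p₂)
        ((totalDegree_sub _ _).trans (max_le hp₁ hp₂)) x ![u, v] (by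
          unfold Agrees at hna
          push Not at hna
          obtain ⟨z, hz₁, hz₂, hz⟩ := hna
          have hzs : z - x ∈ Submodule.span F {u, v} := by
            rw [span_inf_eq hpp]
            exact ⟨(mem_cub _ _ _ _ _).1 hz₁, (mem_cub _ _ _ _ _).1 hz₂⟩
          obtain ⟨a, b, hab⟩ := Submodule.mem_span_pair.1 hzs
          refine ⟨![a, b], ?_⟩
          have : x + ∑ i, ![a, b] i • ![u, v] i = z := by
            simp [Fin.sum_univ_two, hab]
          rw [this, map_sub, ← hT₁ z hz₁, ← hT₂ z hz₂]
          exact sub_ne_zero.2 hz)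
      rw [← sum_ind, ← hq, pow_one] at hsz
      refine le_trans (Finset.sum_le_sum fun c _ => ind_mono ?_) hsz
      rintro ⟨-, -, h⟩
      rw [map_sub, ← hT₁ _ (hin c w), ← hT₂ _ (hin c w'), h, sub_self]
    · rw [Finset.sum_eq_zero]
      · positivity
      · intro c _
        exact ind_false fun h => hpp ⟨h.1, h.2.1⟩
  have h3 : q ^ 2 * ∑ x, P x ≤ N * (d * q) := by
    have : (q ^ 2 : ℝ) = ((Finset.univ : Finset (Fin 2 → F)).card : ℝ) := by
      simp [hq]
    rw [this, ← nsmul_eq_mul, ← Finset.sum_const,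
      ← Finset.sum_congr rfl (fun c _ => h1 c), Finset.sum_comm]
    calc _ ≤ ∑ x : Fin n → F, (d * q : ℝ) := Finset.sum_le_sum fun x _ => h2 x
      _ = _ := by
        simp only [Finset.sum_const, Finset.card_univ, nsmul_eq_mul]
        rw [← hN]
  refine le_of_mul_le_mul_right (le_trans (le_of_eq ?_) (h3.trans (le_of_eq ?_))) hqpos
  · ring
  · ring

lemma count_span (W : Submodule F (Fin n → F)) (hW : Module.finrank F W ≤ 3) :
    ∑ w, ind (w ∈ W) ≤ (Fintype.card F : ℝ) ^ 3 := by
  rw [sum_ind]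
  have h := ncard_submodule W
  have h' : ({a | a ∈ W} : Set (Fin n → F)).ncard = Fintype.card F ^ Module.finrank F W := h
  rw [h']
  push_cast
  exact pow_le_pow_right₀ (by exact_mod_cast Fintype.card_pos) hW

end counting

/-! ### Pairs of cubes in small families -/

section assembly
variable {F : Type} [Field F] [Fintype F] {n : ℕ}

/-- If each `D σ` has at most a `κ` fraction of `𝒞_{x,σ}`, then pairs of cubes through a random
plane with both members in a common `D σ` number at most `κ ^ 2` times the pairs whose values at `x`
agree, up to an error of `2 * N ^ 4 / q` with `N = q ^ n`. -/
lemma count_both (T : AffineSubspace F (Fin n → F) → (Fin n → F) → F) (x : Fin n → F)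
    (D : F → Set (AffineSubspace F (Fin n → F))) (κ : ℝ)
    (hD : ∀ σ, D σ ⊆ cubesVal F n T x σ)
    (hc : ∀ σ, ((D σ).ncard : ℝ) ≤ κ * ((cubesVal F n T x σ).ncard : ℝ)) :
    ∑ σ, ∑ u, ∑ v, (∑ w, ind (cub x u v w ∈ D σ)) ^ 2 ≤
      κ ^ 2 * ∑ u, ∑ v, ∑ w, ∑ w', ind (IsCube F n (cub x u v w) ∧ IsCube F n (cub x u v w') ∧
        T (cub x u v w) x = T (cub x u v w') x) +
      2 * (Fintype.card (Fin n → F) : ℝ) ^ 4 / (Fintype.card F : ℝ) := by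
  classical
  set q : ℝ := (Fintype.card F : ℝ) with hq
  set N : ℝ := (Fintype.card (Fin n → F) : ℝ) with hN
  have hqpos : 0 < q := by
    rw [hq]; exact_mod_cast Fintype.card_pos_iff.2 ⟨(0 : F)⟩
  have hNpos : 0 < N := by
    rw [hN]; exact_mod_cast Fintype.card_pos_iff.2 ⟨(0 : Fin n → F)⟩
  have hsub : ∀ σ, cubesVal F n T x σ ⊆ cubesOn F n x := fun σ C hC => ⟨hC.1, hC.2.1⟩
  have hS : ∀ A : Set (AffineSubspace F (Fin n → F)), A ⊆ cubesOn F n x →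
      ∑ u, ∑ v, ∑ w, ind (cub x u v w ∈ A) = (A.ncard : ℝ) *
        ((∏ i : Fin 3, (Fintype.card F ^ 3 - Fintype.card F ^ (i : ℕ)) : ℕ) : ℝ) := by
    intro A hA
    rw [← Nat.cast_mul, ← ncard_triples x A hA, ← sum_ind]
    simp only [Fintype.sum_prod_type]
  set SD : F → ℝ := fun σ => ∑ u, ∑ v, ∑ w, ind (cub x u v w ∈ D σ) with hSD
  set SC : F → ℝ := fun σ => ∑ u, ∑ v, ∑ w, ind (cub x u v w ∈ cubesVal F n T x σ) with hSC
  have hSDC : ∀ σ, SD σ ≤ κ * SC σ := by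
    intro σ
    simp only [hSD, hSC]
    rw [hS _ ((hD σ).trans (hsub σ)), hS _ (hsub σ), ← mul_assoc]
    exact mul_le_mul_of_nonneg_right (hc σ) (Nat.cast_nonneg _)
  have hSD0 : ∀ σ, 0 ≤ SD σ := fun σ => Finset.sum_nonneg fun _ _ => Finset.sum_nonneg fun _ _ =>
    Finset.sum_nonneg fun _ _ => ind_nonneg _
  have h1 : ∀ σ, ∑ u, ∑ v, (∑ w, ind (cub x u v w ∈ D σ)) ^ 2 ≤
      SD σ ^ 2 / N ^ 2 + 2 * N / q * SD σ := by
    intro σ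
    exact expand_triple (F := F) (fun u v w => ind (cub x u v w ∈ D σ)) (fun _ _ _ => ind_sq _)
      (fun a u v w => by rw [cub_shear₁]) (fun a u v w => by rw [cub_shear₂])
  -- the families `D σ` are disjoint, as `σ` is the value of the cube at `x`
  have h2 : ∑ σ, SD σ ≤ N ^ 3 := by
    have : ∑ σ, SD σ = ∑ u, ∑ v, ∑ w, ∑ σ, ind (cub x u v w ∈ D σ) := by
      simp only [hSD]
      rw [Finset.sum_comm]
      refine Finset.sum_congr rfl fun u _ => ?_
      rw [Finset.sum_comm]
      refine Finset.sum_congr rfl fun v _ => ?_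
      rw [Finset.sum_comm]
    rw [this]
    calc _ ≤ ∑ u : Fin n → F, ∑ v : Fin n → F, ∑ w : Fin n → F, (1 : ℝ) := by
          refine Finset.sum_le_sum fun u _ => Finset.sum_le_sum fun v _ =>
            Finset.sum_le_sum fun w _ => ?_
          rw [Finset.sum_eq_single (T (cub x u v w) x)]
          · exact ind_le_one _
          · intro σ _ hσ
            exact ind_false fun h => hσ (hD σ h).2.2.symm
          · simp
      _ = N ^ 3 := by simp [hN]; ring
  -- Cauchy–Schwarz over the pairs `(u, v)`
  have h3 : ∀ σ, SC σ ^ 2 / N ^ 2 ≤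
      ∑ u, ∑ v, (∑ w, ind (cub x u v w ∈ cubesVal F n T x σ)) ^ 2 := by
    intro σ
    rw [div_le_iff₀ (by positivity), mul_comm]
    have := sq_sum_le_card_mul_sum_sq (s := Finset.univ)
      (f := fun p : (Fin n → F) × (Fin n → F) =>
        ∑ w, ind (cub x p.1 p.2 w ∈ cubesVal F n T x σ))
    rw [Finset.card_univ, Fintype.card_prod, Nat.cast_mul, ← hN, Fintype.sum_prod_type,
      Fintype.sum_prod_type, ← sq] at this
    exact this
  have h4 : ∑ σ, ∑ u, ∑ v, (∑ w, ind (cub x u v w ∈ cubesVal F n T x σ)) ^ 2 =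
      ∑ u, ∑ v, ∑ w, ∑ w', ind (IsCube F n (cub x u v w) ∧ IsCube F n (cub x u v w') ∧
        T (cub x u v w) x = T (cub x u v w') x) := by
    rw [Finset.sum_comm]
    refine Finset.sum_congr rfl fun u _ => ?_
    rw [Finset.sum_comm]
    refine Finset.sum_congr rfl fun v _ => ?_
    simp only [sq, Finset.sum_mul_sum]
    rw [Finset.sum_comm]
    refine Finset.sum_congr rfl fun w _ => ?_
    rw [Finset.sum_comm]
    refine Finset.sum_congr rfl fun w' _ => ?_
    rw [Finset.sum_eq_single (T (cub x u v w) x)]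
    · rw [← ind_and]
      congr 1
      simp only [cubesVal, Set.mem_ofPred_eq, self_mem_cub, true_and, and_true, eq_iff_iff]
      constructor
      · exact fun h => ⟨h.1, h.2.1, h.2.2.symm⟩
      · exact fun h => ⟨h.1, h.2.1, h.2.2.symm⟩
    · intro σ _ hσ
      rw [ind_false fun h => hσ h.2.2.symm, zero_mul]
    · simp
  calc ∑ σ, ∑ u, ∑ v, (∑ w, ind (cub x u v w ∈ D σ)) ^ 2
      ≤ ∑ σ, (κ ^ 2 * (∑ u, ∑ v, (∑ w, ind (cub x u v w ∈ cubesVal F n T x σ)) ^ 2) +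
          2 * N / q * SD σ) := by
        refine Finset.sum_le_sum fun σ _ => (h1 σ).trans ?_
        gcongr ?_ + _
        calc SD σ ^ 2 / N ^ 2 ≤ (κ * SC σ) ^ 2 / N ^ 2 := by
              gcongr
              · exact hSD0 σ
              · exact hSDC σ
          _ = κ ^ 2 * (SC σ ^ 2 / N ^ 2) := by ring
          _ ≤ _ := mul_le_mul_of_nonneg_left (h3 σ) (sq_nonneg _)
    _ = κ ^ 2 * (∑ σ, ∑ u, ∑ v, (∑ w, ind (cub x u v w ∈ cubesVal F n T x σ)) ^ 2) +
          2 * N / q * ∑ σ, SD σ := by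
        rw [Finset.sum_add_distrib, Finset.mul_sum, Finset.mul_sum]
    _ ≤ κ ^ 2 * (∑ σ, ∑ u, ∑ v, (∑ w, ind (cub x u v w ∈ cubesVal F n T x σ)) ^ 2) +
          2 * N / q * N ^ 3 := by gcongr
    _ = _ := by rw [h4]; ring

/-- Most quintuples describe a pair of cubes meeting in a plane. -/
lemma planePair_lower (hn : 6 ≤ n) :
    (Fintype.card (Fin n → F) : ℝ) ^ 5 ≤ 2 * ∑ x, ∑ u, ∑ v, ∑ w, ∑ w',
      ind (PlanePair F n (cub x u v w) (cub x u v w')) := by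
  set q : ℝ := (Fintype.card F : ℝ) with hq
  set N : ℝ := (Fintype.card (Fin n → F) : ℝ) with hN
  have hq2 : 2 ≤ q := by rw [hq]; exact_mod_cast Fintype.one_lt_card (α := F)
  have hNq : N = q ^ n := by rw [hN, hq]; simp
  have hNpos : 0 < N := by rw [hNq]; positivity
  have hN6 : 8 * q ^ 3 ≤ N := by
    rw [hNq]
    calc 8 * q ^ 3 = 2 ^ 3 * q ^ 3 := by norm_num
      _ ≤ q ^ 3 * q ^ 3 := by gcongr
      _ = q ^ 6 := by ring
      _ ≤ q ^ n := pow_le_pow_right₀ (by linarith) hn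
  have hpt : ∀ x u v w w' : Fin n → F, (1 : ℝ) ≤
      ind (PlanePair F n (cub x u v w) (cub x u v w')) +
      (ind (u ∈ (⊥ : Submodule F (Fin n → F))) + ind (v ∈ Submodule.span F {u}) +
        ind (w ∈ Submodule.span F {u, v}) + ind (w' ∈ Submodule.span F {u, v, w})) := by
    intro x u v w w'
    have := ind_nonneg (PlanePair F n (cub x u v w) (cub x u v w'))
    have := ind_nonneg (u ∈ (⊥ : Submodule F (Fin n → F)))
    have := ind_nonneg (v ∈ Submodule.span F {u})
    have := ind_nonneg (w ∈ Submodule.span F {u, v})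
    have := ind_nonneg (w' ∈ Submodule.span F {u, v, w})
    by_cases hu : u ∈ (⊥ : Submodule F (Fin n → F))
    · have := ind_true hu; linarith
    by_cases hv : v ∈ Submodule.span F {u}
    · have := ind_true hv; linarith
    by_cases hw : w ∈ Submodule.span F {u, v}
    · have := ind_true hw; linarith
    by_cases hw' : w' ∈ Submodule.span F {u, v, w}
    · have := ind_true hw'; linarith
    have := ind_true (planePair_of_indep (x := x) (by simpa using hu) hv hw hw')
    linarith
  have hs : ∀ u : Fin n → F, Module.finrank F (Submodule.span F {u}) ≤ 3 := fun u =>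
    (finrank_span_le_card (R := F) ({u} : Set (Fin n → F))).trans (by simp)
  have hmain : ∑ x : Fin n → F, ∑ u : Fin n → F, ∑ v : Fin n → F, ∑ w : Fin n → F,
      ∑ w' : Fin n → F, (1 : ℝ) ≤
      ∑ x : Fin n → F, ∑ u : Fin n → F, ∑ v : Fin n → F, ∑ w : Fin n → F, ∑ w' : Fin n → F,
        (ind (PlanePair F n (cub x u v w) (cub x u v w')) +
      (ind (u ∈ (⊥ : Submodule F (Fin n → F))) + ind (v ∈ Submodule.span F {u}) +
        ind (w ∈ Submodule.span F {u, v}) + ind (w' ∈ Submodule.span F {u, v, w}))) := by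
    gcongr with x _ u _ v _ w _ w' _
    exact hpt x u v w w'
  simp only [Finset.sum_add_distrib] at hmain
  have b1 : ∑ x : Fin n → F, ∑ u : Fin n → F, ∑ v : Fin n → F, ∑ w : Fin n → F,
      ∑ w' : Fin n → F, ind (u ∈ (⊥ : Submodule F (Fin n → F))) ≤ N ^ 4 * q ^ 3 := by
    simp only [Finset.sum_const, Finset.card_univ, nsmul_eq_mul, ← Finset.mul_sum, ← hN]
    calc _ ≤ N * (N * (N * (N * q ^ 3))) := by gcongr; exact count_span _ (by simp)
      _ = _ := by ring
  have b2 : ∑ x : Fin n → F, ∑ u : Fin n → F, ∑ v : Fin n → F, ∑ w : Fin n → F,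
      ∑ w' : Fin n → F, ind (v ∈ Submodule.span F {u}) ≤ N ^ 4 * q ^ 3 := by
    calc _ ≤ ∑ x : Fin n → F, ∑ u : Fin n → F, N * (N * q ^ 3) := by
          gcongr with x _ u _
          simp only [Finset.sum_const, Finset.card_univ, nsmul_eq_mul, ← Finset.mul_sum, ← hN]
          gcongr; exact count_span _ (hs u)
      _ = _ := by
          simp only [Finset.sum_const, Finset.card_univ, nsmul_eq_mul, ← hN]; ring
  have b3 : ∑ x : Fin n → F, ∑ u : Fin n → F, ∑ v : Fin n → F, ∑ w : Fin n → F,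
      ∑ w' : Fin n → F, ind (w ∈ Submodule.span F {u, v}) ≤ N ^ 4 * q ^ 3 := by
    calc _ ≤ ∑ x : Fin n → F, ∑ u : Fin n → F, ∑ v : Fin n → F, N * q ^ 3 := by
          gcongr with x _ u _ v _
          simp only [Finset.sum_const, Finset.card_univ, nsmul_eq_mul, ← Finset.mul_sum, ← hN]
          gcongr; exact count_span _ ((finrank_span_pair_le u v).trans (by norm_num))
      _ = _ := by
          simp only [Finset.sum_const, Finset.card_univ, nsmul_eq_mul, ← hN]; ring
  have b4 : ∑ x : Fin n → F, ∑ u : Fin n → F, ∑ v : Fin n → F, ∑ w : Fin n → F,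
      ∑ w' : Fin n → F, ind (w' ∈ Submodule.span F {u, v, w}) ≤ N ^ 4 * q ^ 3 := by
    calc _ ≤ ∑ x : Fin n → F, ∑ u : Fin n → F, ∑ v : Fin n → F, ∑ w : Fin n → F, q ^ 3 := by
          gcongr with x _ u _ v _ w _
          exact count_span _ (finrank_span_triple_le u v w)
      _ = _ := by
          simp only [Finset.sum_const, Finset.card_univ, nsmul_eq_mul, ← hN]; ring
  have b0 : ∑ x : Fin n → F, ∑ u : Fin n → F, ∑ v : Fin n → F, ∑ w : Fin n → F,
      ∑ w' : Fin n → F, (1 : ℝ) = N ^ 5 := by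
    simp only [Finset.sum_const, Finset.card_univ, nsmul_eq_mul, ← hN]; ring
  rw [b0] at hmain
  have : 8 * (N ^ 4 * q ^ 3) ≤ N ^ 5 := by
    calc _ = N ^ 4 * (8 * q ^ 3) := by ring
      _ ≤ N ^ 4 * N := by gcongr
      _ = _ := by ring
  linarith

end assembly

/-! ### The probability bound -/

section final
variable {F : Type} [Field F] [Fintype F] {n : ℕ}

lemma toOmega_mem (x u v w w' : Fin n → F) :
    toOmega (x, u, v, w, w') ∈ OmegaD F n ↔ PlanePair F n (cub x u v w) (cub x u v w') := by
  refine ⟨fun h => h.1, fun h => ⟨h, self_mem_cub _ _ _ _, self_mem_cub _ _ _ _, ?_, ?_, ?_⟩⟩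
  · simpa [toOmega, mem_cub] using mem_span_triple_1 (F := F) u v w
  · simpa [toOmega, mem_cub] using mem_span_triple_1 (F := F) u v w'
  · have h1 := ((planePair_cub x u v w w').1 h).1
    have hu := (indep_of_finrank h1).1
    simpa [toOmega] using hu

/-- Passing from points of `OmegaD` to tuples of vectors multiplies all counts by the same
constant. -/
lemma sum_toOmega (E : Set ((AffineSubspace F (Fin n → F) × AffineSubspace F (Fin n → F)) ×
      (Fin n → F) × (Fin n → F))) (hE : E ⊆ OmegaD F n) :
    ∑ x, ∑ u, ∑ v, ∑ w, ∑ w', ind (toOmega (x, u, v, w, w') ∈ E) =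
      (E.ncard : ℝ) * (((Fintype.card F ^ 2 - Fintype.card F) *
        ((Fintype.card F ^ 3 - Fintype.card F ^ 2) *
          (Fintype.card F ^ 3 - Fintype.card F ^ 2)) : ℕ) : ℝ) := by
  have h := sum_ind (fun t => toOmega t ∈ E)
  rw [ncard_tuples E hE] at h
  simp only [Fintype.sum_prod_type] at h
  rw [h]; push_cast; rfl

/-- The acceptance probability expressed through quintuples. -/
lemma sum_agree (T : AffineSubspace F (Fin n → F) → (Fin n → F) → F) :
    ∑ x, ∑ u, ∑ v, ∑ w, ∑ w', ind (PlanePair F n (cub x u v w) (cub x u v w') ∧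
      Agrees F n T (cub x u v w) (cub x u v w')) =
    epsT F n T * ∑ x, ∑ u, ∑ v, ∑ w, ∑ w',
      ind (PlanePair F n (cub x u v w) (cub x u v w')) := by
  set P : Set (AffineSubspace F (Fin n → F) × AffineSubspace F (Fin n → F)) :=
    {p | PlanePair F n p.1 p.2} with hP
  set A : Set (AffineSubspace F (Fin n → F) × AffineSubspace F (Fin n → F)) :=
    {p | PlanePair F n p.1 p.2 ∧ Agrees F n T p.1 p.2} with hA
  have key : ∀ E : Set (AffineSubspace F (Fin n → F) × AffineSubspace F (Fin n → F)), E ⊆ P →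
      ∑ x, ∑ u, ∑ v, ∑ w, ∑ w', ind ((cub x u v w, cub x u v w') ∈ E) =
        (E.ncard : ℝ) * (((Fintype.card F ^ 2 * Fintype.card F ^ 2 - Fintype.card F ^ 2) : ℕ) : ℝ)
        * (((Fintype.card F ^ 2 - Fintype.card F) *
        ((Fintype.card F ^ 3 - Fintype.card F ^ 2) *
          (Fintype.card F ^ 3 - Fintype.card F ^ 2)) : ℕ) : ℝ) := by
    intro E hE
    rw [← Nat.cast_mul, ← ncard_omega_pairs E (fun p hp => hE hp),
      ← sum_toOmega _ (fun ω hω => hω.1)]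
    refine Finset.sum_congr rfl fun x _ => Finset.sum_congr rfl fun u _ =>
      Finset.sum_congr rfl fun v _ => Finset.sum_congr rfl fun w _ =>
      Finset.sum_congr rfl fun w' _ => congrArg ind (propext ?_)
    exact ⟨fun h => ⟨(toOmega_mem x u v w w').2 (hE h), h⟩, fun h => h.2⟩
  have h1 := key A (fun p hp => hp.1)
  have h2 := key P subset_rfl
  have hε : (A.ncard : ℝ) = epsT F n T * (P.ncard : ℝ) := by
    change _ = (A.ncard : ℝ) / (P.ncard : ℝ) * (P.ncard : ℝ)
    have : Finite (AffineSubspace F (Fin n → F)) :=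
      Finite.of_injective _ (SetLike.coe_injective (A := AffineSubspace F (Fin n → F)))
    have hle : A.ncard ≤ P.ncard := Set.ncard_le_ncard (fun p hp => hp.1) (Set.toFinite P)
    -- without plane pairs `epsT` is `0 / 0 = 0`, and both sides vanish
    by_cases h0 : P.ncard = 0
    · have : A.ncard = 0 := by omega
      simp [this]
    · have : (P.ncard : ℝ) ≠ 0 := by exact_mod_cast h0
      rw [div_mul_cancel₀ _ this]
  calc _ = _ := h1
    _ = epsT F n T * ((P.ncard : ℝ) *
        (((Fintype.card F ^ 2 * Fintype.card F ^ 2 - Fintype.card F ^ 2) : ℕ) : ℝ)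
        * (((Fintype.card F ^ 2 - Fintype.card F) *
        ((Fintype.card F ^ 3 - Fintype.card F ^ 2) *
          (Fintype.card F ^ 3 - Fintype.card F ^ 2)) : ℕ) : ℝ)) := by rw [hε]; ring
    _ = _ := by rw [← h2]; rfl

lemma sum_swap5 {V : Type*} [Fintype V] (f : V → V → V → V → V → ℝ) :
    ∑ x, ∑ u, ∑ v, ∑ w, ∑ w', f x u v w w' = ∑ u, ∑ v, ∑ w, ∑ w', ∑ x, f x u v w w' := by
  rw [Finset.sum_comm]
  refine Finset.sum_congr rfl fun u _ => ?_
  rw [Finset.sum_comm]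
  refine Finset.sum_congr rfl fun v _ => ?_
  rw [Finset.sum_comm]
  refine Finset.sum_congr rfl fun w _ => ?_
  rw [Finset.sum_comm]

/-- Up to terms of relative size `O(d / q)`, two cubes through a common plane that have the same
value at one point of it already agree on the whole plane. -/
lemma sum_value_agree {d : ℕ} (hn : 6 ≤ n) (T : AffineSubspace F (Fin n → F) → (Fin n → F) → F)
    (hT : DegTable F n d T) :
    ∑ x, ∑ u, ∑ v, ∑ w, ∑ w', ind (IsCube F n (cub x u v w) ∧ IsCube F n (cub x u v w') ∧
        T (cub x u v w) x = T (cub x u v w') x) ≤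
    ∑ x, ∑ u, ∑ v, ∑ w, ∑ w', ind (PlanePair F n (cub x u v w) (cub x u v w') ∧
      Agrees F n T (cub x u v w) (cub x u v w')) +
    (d + 1) * ((Fintype.card (Fin n → F) : ℝ) ^ 5 / (Fintype.card F : ℝ)) := by
  set q : ℝ := (Fintype.card F : ℝ) with hq
  set N : ℝ := (Fintype.card (Fin n → F) : ℝ) with hN
  have hq2 : 2 ≤ q := by rw [hq]; exact_mod_cast Fintype.one_lt_card (α := F)
  have hqpos : 0 < q := by linarith
  have hNq : N = q ^ n := by rw [hN, hq]; simp
  have hNpos : 0 < N := by rw [hNq]; positivity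
  have hW : ∑ x, ∑ u, ∑ v, ∑ w, ∑ w', ind (PlanePair F n (cub x u v w) (cub x u v w') ∧
      ¬ Agrees F n T (cub x u v w) (cub x u v w') ∧
      T (cub x u v w) x = T (cub x u v w') x) ≤ d * (N ^ 5 / q) := by
    rw [sum_swap5 (V := Fin n → F)]
    have : ∀ u v w w' : Fin n → F,
        ∑ x, ind (PlanePair F n (cub x u v w) (cub x u v w') ∧
      ¬ Agrees F n T (cub x u v w) (cub x u v w') ∧
      T (cub x u v w) x = T (cub x u v w') x) ≤ d * N / q := by
      intro u v w w'
      rw [le_div_iff₀ hqpos, mul_comm]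
      exact count_point_agree T hT u v w w'
    refine (Finset.sum_le_sum fun u _ => Finset.sum_le_sum fun v _ =>
      Finset.sum_le_sum fun w _ => Finset.sum_le_sum fun w' _ => this u v w w').trans (le_of_eq ?_)
    simp only [Finset.sum_const, Finset.card_univ, nsmul_eq_mul, ← hN]
    ring
  have hM : ∑ _x : Fin n → F, ∑ u : Fin n → F, ∑ v : Fin n → F, ∑ w : Fin n → F, ∑ w',
      ind (w' ∈ Submodule.span F {u, v, w}) ≤ N ^ 5 / q := by
    refine (Finset.sum_le_sum fun x _ => Finset.sum_le_sum fun u _ => Finset.sum_le_sum fun v _ =>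
      Finset.sum_le_sum fun w _ => count_span _ (finrank_span_triple_le u v w)).trans ?_
    simp only [Finset.sum_const, Finset.card_univ, nsmul_eq_mul, ← hN, ← hq]
    rw [le_div_iff₀ hqpos]
    have h4 : q ^ 4 ≤ N := by rw [hNq]; exact pow_le_pow_right₀ (by linarith) (by omega)
    have := mul_le_mul_of_nonneg_left h4 (by positivity : 0 ≤ N ^ 4)
    linarith [this]
  have hpt : ∀ x u v w w' : Fin n → F,
      ind (IsCube F n (cub x u v w) ∧ IsCube F n (cub x u v w') ∧
        T (cub x u v w) x = T (cub x u v w') x) ≤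
      ind (PlanePair F n (cub x u v w) (cub x u v w') ∧
        Agrees F n T (cub x u v w) (cub x u v w')) +
      ind (PlanePair F n (cub x u v w) (cub x u v w') ∧
        ¬ Agrees F n T (cub x u v w) (cub x u v w') ∧
        T (cub x u v w) x = T (cub x u v w') x) +
      ind (w' ∈ Submodule.span F {u, v, w}) := by
    intro x u v w w'
    by_cases h : IsCube F n (cub x u v w) ∧ IsCube F n (cub x u v w') ∧
        T (cub x u v w) x = T (cub x u v w') x
    · rw [ind_true h]
      by_cases hp : PlanePair F n (cub x u v w) (cub x u v w')
      · by_cases ha : Agrees F n T (cub x u v w) (cub x u v w')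
        · rw [ind_true (P := _ ∧ Agrees F n T _ _) ⟨hp, ha⟩]
          linarith [ind_nonneg (PlanePair F n (cub x u v w) (cub x u v w') ∧
            ¬ Agrees F n T (cub x u v w) (cub x u v w') ∧
            T (cub x u v w) x = T (cub x u v w') x),
            ind_nonneg (w' ∈ Submodule.span F {u, v, w})]
        · rw [ind_true (P := _ ∧ ¬ Agrees F n T _ _ ∧ _) ⟨hp, ha, h.2.2⟩]
          linarith [ind_nonneg (PlanePair F n (cub x u v w) (cub x u v w') ∧
            Agrees F n T (cub x u v w) (cub x u v w')),
            ind_nonneg (w' ∈ Submodule.span F {u, v, w})]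
      · rw [ind_true (mem_span_of_not_planePair h.1 h.2.1 hp)]
        linarith [ind_nonneg (PlanePair F n (cub x u v w) (cub x u v w') ∧
            ¬ Agrees F n T (cub x u v w) (cub x u v w') ∧
            T (cub x u v w) x = T (cub x u v w') x),
          ind_nonneg (PlanePair F n (cub x u v w) (cub x u v w') ∧
            Agrees F n T (cub x u v w) (cub x u v w'))]
    · rw [ind_false h]
      have := ind_nonneg (PlanePair F n (cub x u v w) (cub x u v w') ∧
            ¬ Agrees F n T (cub x u v w) (cub x u v w') ∧
            T (cub x u v w) x = T (cub x u v w') x)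
      have := ind_nonneg (PlanePair F n (cub x u v w) (cub x u v w') ∧
            Agrees F n T (cub x u v w) (cub x u v w'))
      have := ind_nonneg (w' ∈ Submodule.span F {u, v, w})
      positivity
  have hsum := Finset.sum_le_sum fun x (_ : x ∈ Finset.univ) => Finset.sum_le_sum
    fun u (_ : u ∈ Finset.univ) => Finset.sum_le_sum fun v (_ : v ∈ Finset.univ) =>
    Finset.sum_le_sum fun w (_ : w ∈ Finset.univ) => Finset.sum_le_sum
    fun w' (_ : w' ∈ Finset.univ) => hpt x u v w w'
  simp only [Finset.sum_add_distrib] at hsum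
  linarith

/-- The numerical conclusion: the error terms are absorbed because `γ ε ≥ 10⁴ d³ / q`. The
letters stand for `Y = N ^ 5 / q`, `Om` and `Ag` for the numbers of plane pairs and of agreeing
plane pairs, `Z` for the pairs with equal value at `x`, and `Bad₁`, `Bad₂` for the two ways in which
the event can occur, all counted in quintuples. -/
lemma final_arith {d : ℕ} {q Y ε Om Ag Z Bad₁ Bad₂ κ : ℝ} (hd : 1 ≤ d) (hq : 2 ≤ q) (hY : 0 ≤ Y)
    (hκ : κ ^ 2 = 4 * gam d)
    (hε : 10 ^ 7 * (d : ℝ) ^ 6 / q ≤ ε) (hAg : Ag = ε * Om) (hOm : q * Y ≤ 2 * Om)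
    (hZ : Z ≤ Ag + (d + 1) * Y) (h₁ : (q - 1) * Bad₁ ≤ d * (q * Y))
    (h₂ : Bad₂ ≤ κ ^ 2 * Z + 2 * Y) :
    Bad₁ + Bad₂ ≤ 7 * gam d * Ag := by
  have hd1 : (1 : ℝ) ≤ d := by exact_mod_cast hd
  have hd3 : (1 : ℝ) ≤ (d : ℝ) ^ 3 := one_le_pow₀ hd1
  have hg : gam d * (1000 * (d : ℝ) ^ 3) = 1 := by
    unfold gam; field_simp
  have hg0 : 0 < gam d := by unfold gam; positivity
  have hg1 : gam d ≤ 1 / 1000 := by nlinarith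
  have hB1 : Bad₁ ≤ 2 * d * Y := by
    have hdY : 0 ≤ d * Y := by positivity
    have : (q - 1) * Bad₁ ≤ (q - 1) * (2 * d * Y) := by nlinarith
    exact le_of_mul_le_mul_left this (by linarith)
  have hAgl : 10 ^ 7 * (d : ℝ) ^ 6 * Y ≤ 2 * Ag := by
    have h1 : 10 ^ 7 * (d : ℝ) ^ 6 / q * (q * Y) ≤ ε * (2 * Om) := by
      apply mul_le_mul hε hOm (by positivity)
      exact le_trans (by positivity) hε
    have h2 : 10 ^ 7 * (d : ℝ) ^ 6 / q * (q * Y) = 10 ^ 7 * (d : ℝ) ^ 6 * Y := by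
      field_simp
    rw [hAg]; linarith
  have hgA : 10 ^ 4 * (d : ℝ) ^ 3 * Y ≤ 2 * (gam d * Ag) := by
    have h := mul_le_mul_of_nonneg_left hAgl hg0.le
    have e : gam d * (10 ^ 7 * (d : ℝ) ^ 6 * Y) =
        (gam d * (1000 * (d : ℝ) ^ 3)) * (10 ^ 4 * (d : ℝ) ^ 3 * Y) := by ring
    rw [e, hg] at h
    linarith
  have hdd : (d : ℝ) * Y ≤ (d : ℝ) ^ 3 * Y := by
    apply mul_le_mul_of_nonneg_right _ hY
    exact le_self_pow₀ hd1 (by norm_num)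
  have hYd : Y ≤ d * Y := by nlinarith
  have hκZ : κ ^ 2 * Z ≤ 4 * gam d * Ag + d * Y := by
    rw [hκ]
    have h := mul_le_mul_of_nonneg_left hZ (by positivity : 0 ≤ 4 * gam d)
    have h' : gam d * ((d + 1) * Y) ≤ 1 / 1000 * ((d + 1) * Y) :=
      mul_le_mul_of_nonneg_right hg1 (by positivity)
    linarith
  linarith

lemma card_diff_calF (T : AffineSubspace F (Fin n → F) → (Fin n → F) → F)
    (g : (Fin n → F) → F → MvPolynomial (Fin n) F) (x : Fin n → F) (σ : F) :
    ((cubesVal F n T x σ \ calF F n T g x σ).ncard : ℝ) =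
      ((cubesVal F n T x σ).ncard : ℝ) - ((calF F n T g x σ).ncard : ℝ) := by
  have : Finite (AffineSubspace F (Fin n → F)) :=
    Finite.of_injective _ (SetLike.coe_injective (A := AffineSubspace F (Fin n → F)))
  have h : calF F n T g x σ ⊆ cubesVal F n T x σ := fun C hC => hC.1
  have := Set.ncard_sdiff_add_ncard_of_subset h (Set.toFinite _)
  rw [← this]; push_cast; ring

end final

/-- Given, for each excellent pair `(x, σ)`, a polynomial `g x σ` of degree
at most `d` agreeing with `T` on at least a `1 − 2√γ` fraction of `𝒞_{x,σ}`, the probability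
under `D` that `(C₁, C₂) ∈ S`, `(x, σ)` is excellent, and `C₁ ∈ 𝒟_{x,σ} = 𝒞_{x,σ} ∖ ℱ_{x,σ}` is
at most `7γε`. -/
theorem pass_dxsigma {F : Type} [Field F] [Fintype F] {n d : ℕ}
    (hn : 6 ≤ n) (hd : 1 ≤ d)
    (hq : (11 * d : ℝ) < (Fintype.card F : ℝ) ^ ((1 : ℝ) / 9))
    (T : AffineSubspace F (Fin n → F) → (Fin n → F) → F)
    (hT : DegTable F n d T)
    (hε : 10 ^ 7 * (d : ℝ) ^ 6 / (Fintype.card F : ℝ) ≤ epsT F n T)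
    (g : (Fin n → F) → F → MvPolynomial (Fin n) F)
    (hg : ∀ (x : Fin n → F) (σ : F), Excellent F n T d (epsT F n T) x σ →
      (g x σ).totalDegree ≤ d ∧
      (1 - 2 * Real.sqrt (gam d)) * ((cubesVal F n T x σ).ncard : ℝ) ≤
        ((calF F n T g x σ).ncard : ℝ)) :
    ({ω ∈ OmegaD F n | Agrees F n T ω.1.1 ω.1.2 ∧
        Excellent F n T d (epsT F n T) ω.2.1 (T ω.1.1 ω.2.1) ∧
        ω.1.1 ∈ cubesVal F n T ω.2.1 (T ω.1.1 ω.2.1) \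
          calF F n T g ω.2.1 (T ω.1.1 ω.2.1)}.ncard : ℝ) ≤
      7 * gam d * epsT F n T * ((OmegaD F n).ncard : ℝ) := by
  classical
  set ε : ℝ := epsT F n T with hεdef
  set E : Set ((AffineSubspace F (Fin n → F) × AffineSubspace F (Fin n → F)) ×
      (Fin n → F) × (Fin n → F)) := {ω ∈ OmegaD F n | Agrees F n T ω.1.1 ω.1.2 ∧
        Excellent F n T d ε ω.2.1 (T ω.1.1 ω.2.1) ∧
        ω.1.1 ∈ cubesVal F n T ω.2.1 (T ω.1.1 ω.2.1) \
          calF F n T g ω.2.1 (T ω.1.1 ω.2.1)} with hE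
  have hq1 : 1 < Fintype.card F := Fintype.one_lt_card
  have hq2 : (2 : ℝ) ≤ (Fintype.card F : ℝ) := by exact_mod_cast hq1
  have hqpos : (0 : ℝ) < (Fintype.card F : ℝ) := by linarith
  have hsE := sum_toOmega E (fun ω hω => hω.1)
  have hsO := sum_toOmega (OmegaD F n) subset_rfl
  have hK : 0 < (Fintype.card F ^ 2 - Fintype.card F) *
        ((Fintype.card F ^ 3 - Fintype.card F ^ 2) *
          (Fintype.card F ^ 3 - Fintype.card F ^ 2)) := by
    have h1 : 0 < Fintype.card F ^ 2 - Fintype.card F := by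
      have : Fintype.card F ^ 1 < Fintype.card F ^ 2 := Nat.pow_lt_pow_right hq1 (by norm_num)
      rw [pow_one] at this
      omega
    have h2 : 0 < Fintype.card F ^ 3 - Fintype.card F ^ 2 := by
      have : Fintype.card F ^ 2 < Fintype.card F ^ 3 := Nat.pow_lt_pow_right hq1 (by norm_num)
      omega
    positivity
  generalize (Fintype.card F ^ 2 - Fintype.card F) *
        ((Fintype.card F ^ 3 - Fintype.card F ^ 2) *
          (Fintype.card F ^ 3 - Fintype.card F ^ 2)) = K at hK hsE hsO
  have hKr : (0 : ℝ) < (K : ℝ) := by exact_mod_cast hK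
  have hT' : ∀ C : AffineSubspace F (Fin n → F), ∃ p : MvPolynomial (Fin n) F,
      IsCube F n C → p.totalDegree ≤ d ∧ ∀ z ∈ C, T C z = eval z p := fun C => by
    by_cases h : IsCube F n C
    · obtain ⟨p, hp⟩ := hT C h
      exact ⟨p, fun _ => hp⟩
    · exact ⟨0, fun h' => absurd h' h⟩
  choose p hp using hT'
  let D : (Fin n → F) → F → Set (AffineSubspace F (Fin n → F)) := fun x σ =>
    {C | Excellent F n T d ε x σ ∧ C ∈ cubesVal F n T x σ \ calF F n T g x σ}
  -- `r x C` vanishes where `T C` coincides with the polynomial of `(x, T C x)`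
  let B : (Fin n → F) → Set (AffineSubspace F (Fin n → F)) := fun x =>
    {C | C ∈ D x (T C x)}
  let r : (Fin n → F) → AffineSubspace F (Fin n → F) → MvPolynomial (Fin n) F := fun x C =>
    p C - g x (T C x)
  have hBdeg : ∀ x, ∀ C ∈ B x, (r x C).totalDegree ≤ d := by
    rintro x C ⟨hex, hC, -⟩
    exact (totalDegree_sub _ _).trans (max_le (hp C hC.1).1 (hg _ _ hex).1)
  have hBne : ∀ x, ∀ C ∈ B x, ∃ z ∈ C, eval z (r x C) ≠ 0 := by
    rintro x C ⟨hex, hC, hF⟩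
    by_contra! hall
    refine hF ⟨hC, fun z hz => ?_⟩
    have := hall z hz
    rw [map_sub, sub_eq_zero] at this
    rw [(hp C hC.1).2 z hz, this]
  have h₁ : ∀ x, ((Fintype.card F : ℝ) - 1) * ∑ u, ∑ v, ∑ w,
      ind (cub x u v w ∈ B x ∧ eval (x + u) (r x (cub x u v w)) = 0) ≤
      d * (Fintype.card (Fin n → F) : ℝ) ^ 3 := fun x =>
    count_vanish x (B x) (r x) (hBdeg x) (hBne x)
  have h₂ : ∀ x, ∑ σ, ∑ u, ∑ v, (∑ w, ind (cub x u v w ∈ D x σ)) ^ 2 ≤ _ := fun x =>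
    count_both T x (D x) (2 * Real.sqrt (gam d)) (fun σ C hC => hC.2.1) (fun σ => by
      by_cases hex : Excellent F n T d ε x σ
      · have : D x σ = cubesVal F n T x σ \ calF F n T g x σ :=
          Set.ext fun C => and_iff_right hex
        rw [this, card_diff_calF]
        linarith [(hg x σ hex).2]
      · have : D x σ = ∅ := Set.eq_empty_of_forall_notMem fun C hC => hex hC.1
        rw [this, Set.ncard_empty, Nat.cast_zero]
        positivity)
  -- if the second cube also lies outside `calF`, the pair is counted by `D`; otherwise `T C₁`
  -- coincides with the polynomial of the excellent pair at the random point `x + u`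
  have hpt : ∀ x u v w w' : Fin n → F, ind (toOmega (x, u, v, w, w') ∈ E) ≤
      ind (cub x u v w ∈ B x ∧ eval (x + u) (r x (cub x u v w)) = 0) +
      ∑ σ, ind (cub x u v w ∈ D x σ) * ind (cub x u v w' ∈ D x σ) := by
    intro x u v w w'
    have hnn : ∀ σ, 0 ≤ ind (cub x u v w ∈ D x σ) * ind (cub x u v w' ∈ D x σ) := fun σ =>
      mul_nonneg (ind_nonneg _) (ind_nonneg _)
    by_cases h : toOmega (x, u, v, w, w') ∈ E
    swap
    · rw [ind_false h]
      exact add_nonneg (ind_nonneg _) (Finset.sum_nonneg fun σ _ => hnn σ)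
    rw [ind_true h]
    obtain ⟨hΩ, hag, hex, hC, hF⟩ := h
    obtain ⟨hpp, hx1, hx2, hy1, hy2, -⟩ := hΩ
    change PlanePair F n (cub x u v w) (cub x u v w') at hpp
    change x ∈ cub x u v w at hx1
    change x ∈ cub x u v w' at hx2
    change x + u ∈ cub x u v w at hy1
    change x + u ∈ cub x u v w' at hy2
    change Agrees F n T (cub x u v w) (cub x u v w') at hag
    change Excellent F n T d ε x (T (cub x u v w) x) at hex
    change cub x u v w ∈ cubesVal F n T x (T (cub x u v w) x) at hC
    change cub x u v w ∉ calF F n T g x (T (cub x u v w) x) at hF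
    have hC' : cub x u v w' ∈ cubesVal F n T x (T (cub x u v w) x) :=
      ⟨hpp.2.1, hx2, (hag x hx1 hx2).symm⟩
    by_cases hF' : cub x u v w' ∈ calF F n T g x (T (cub x u v w) x)
    · have hB : cub x u v w ∈ B x := ⟨hex, hC, hF⟩
      have hev : eval (x + u) (r x (cub x u v w)) = 0 := by
        rw [map_sub, sub_eq_zero, ← (hp _ hpp.1).2 _ hy1, ← hF'.2 _ hy2, hag _ hy1 hy2]
      rw [ind_true (P := _ ∧ _) ⟨hB, hev⟩]
      linarith [Finset.sum_nonneg fun σ (_ : σ ∈ Finset.univ) => hnn σ]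
    · have hs := Finset.single_le_sum (fun σ _ => hnn σ)
        (Finset.mem_univ (T (cub x u v w) x))
      rw [ind_true (P := cub x u v w ∈ D x _) ⟨hex, hC, hF⟩,
        ind_true (P := cub x u v w' ∈ D x _) ⟨hex, hC', hF'⟩] at hs
      linarith [ind_nonneg (cub x u v w ∈ B x ∧ eval (x + u) (r x (cub x u v w)) = 0)]
  have hsum := Finset.sum_le_sum fun x (_ : x ∈ Finset.univ) => Finset.sum_le_sum
    fun u (_ : u ∈ Finset.univ) => Finset.sum_le_sum fun v (_ : v ∈ Finset.univ) =>
    Finset.sum_le_sum fun w (_ : w ∈ Finset.univ) => Finset.sum_le_sum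
    fun w' (_ : w' ∈ Finset.univ) => hpt x u v w w'
  simp only [Finset.sum_add_distrib] at hsum
  have hS : ∀ x, ∑ u, ∑ v, ∑ w, ∑ w', ∑ σ,
      ind (cub x u v w ∈ D x σ) * ind (cub x u v w' ∈ D x σ) =
      ∑ σ, ∑ u, ∑ v, (∑ w, ind (cub x u v w ∈ D x σ)) ^ 2 := by
    intro x
    rw [Finset.sum_comm (s := (Finset.univ : Finset F))]
    refine Finset.sum_congr rfl fun u _ => ?_
    rw [Finset.sum_comm (s := (Finset.univ : Finset F))]
    refine Finset.sum_congr rfl fun v _ => ?_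
    simp only [sq, Finset.sum_mul_sum]
    rw [Finset.sum_comm (s := (Finset.univ : Finset F))]
    refine Finset.sum_congr rfl fun w _ => ?_
    rw [Finset.sum_comm]
  simp only [hS] at hsum
  set N : ℝ := (Fintype.card (Fin n → F) : ℝ) with hN
  set q : ℝ := (Fintype.card F : ℝ) with hqdef
  have hNpos : 0 < N := by rw [hN]; exact_mod_cast Fintype.card_pos
  have hb₂ := Finset.sum_le_sum fun x (_ : x ∈ Finset.univ) => h₂ x
  rw [Finset.sum_add_distrib, ← Finset.mul_sum] at hb₂
  have hc₂ : ∑ _x : Fin n → F, 2 * N ^ 4 / q = 2 * (N ^ 5 / q) := by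
    simp only [Finset.sum_const, Finset.card_univ, nsmul_eq_mul, ← hN]
    ring
  rw [hc₂] at hb₂
  have hqY : q * (N ^ 5 / q) = N ^ 5 := by field_simp
  have hb₁ : (q - 1) * ∑ x, ∑ u, ∑ v, ∑ w, ∑ _w' : Fin n → F,
      ind (cub x u v w ∈ B x ∧ eval (x + u) (r x (cub x u v w)) = 0) ≤
      d * (q * (N ^ 5 / q)) := by
    have h := Finset.sum_le_sum fun x (_ : x ∈ Finset.univ) => h₁ x
    rw [← Finset.mul_sum] at h
    simp only [Finset.sum_const, Finset.card_univ, nsmul_eq_mul, ← hN, ← Finset.mul_sum] at h ⊢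
    rw [hqY]
    have h' := mul_le_mul_of_nonneg_left h hNpos.le
    linarith
  have hg0 : 0 ≤ gam d := by unfold gam; positivity
  have hκ : (2 * Real.sqrt (gam d)) ^ 2 = 4 * gam d := by
    rw [mul_pow, Real.sq_sqrt hg0]; norm_num
  have hlow := planePair_lower (F := F) hn
  rw [← hN, ← hqY] at hlow
  have hfin := final_arith hd hq2 (by positivity) hκ hε (sum_agree T) hlow
    (sum_value_agree hn T hT) hb₁ hb₂
  have htot := hsum.trans hfin
  rw [hsE, sum_agree T, ← hεdef] at htot
  simp only [toOmega_mem] at hsO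
  rw [hsO] at htot
  refine le_of_mul_le_mul_right (htot.trans (le_of_eq ?_)) hKr
  ring
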